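/- arXiv:1103.3088 — 3 statements merged into one kernel-verified Lean document; each statement's English description precedes it below -/
import Mathlib

section
/- Boundary case s = d of the minimal Riesz energy on the sphere: for d ≥ 2, the minimal Riesz d-energy E_d(S^d; N) := inf { ∑_{j≠k} |x_j − x_k|^{−d} : x_1,…,x_N ∈ S^d } satisfies E_d(S^d; N) / (N² log N) → H_d(B^d)/H_d(S^d) = (1/d) · Γ((d+1)/2) / ( √π · Γ(d/2) ) as N → ∞. -/
open MeasureTheory Metric Real Filter
open scoped BigOperators ENNReal NNReal RealInnerProductSpace Topology

noncomputable section

/-- Normalized uniform (surface) probability measure `σ_d` on the unit sphere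
`S^d ⊂ ℝ^{d+1}`, defined as normalized `d`-dimensional Hausdorff measure. -/
def sigmaMeasure (d : ℕ) : Measure (EuclideanSpace ℝ (Fin (d + 1))) :=
  (μH[(d : ℝ)] (sphere (0 : EuclideanSpace ℝ (Fin (d + 1))) 1))⁻¹ •
    μH[(d : ℝ)].restrict (sphere (0 : EuclideanSpace ℝ (Fin (d + 1))) 1)

/-- Squared spherical cap `L²` discrepancy of the `N`-point configuration `x` on `S^d`:
`∫_{-1}^{1} ∫_{S^d} |#{k : x_k ∈ C(y;t)}/N − σ_d(C(y;t))|² dσ_d(y) dt`. -/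
def L2DiscSq (d N : ℕ) (x : Fin N → EuclideanSpace ℝ (Fin (d + 1))) : ℝ :=
  ∫ t in Set.Icc (-1 : ℝ) 1, ∫ y,
    ((Nat.card {k : Fin N // t ≤ ⟪y, x k⟫} : ℝ) / N
      - (sigmaMeasure d {z | t ≤ ⟪y, z⟫}).toReal) ^ 2 ∂ sigmaMeasure d

/-- Spherical cap `L²` discrepancy. -/
def L2Disc (d N : ℕ) (x : Fin N → EuclideanSpace ℝ (Fin (d + 1))) : ℝ :=
  Real.sqrt (L2DiscSq d N x)

/-- The minimal Riesz `s`-energy `E_s(S^d; N) = inf { ∑_{j≠k} |x_j − x_k|^{−s} }` over all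
`N`-point configurations on `S^d` (with value `∞` for a pair of coincident points). -/
def minRieszEnergy (s : ℝ) (d N : ℕ) : ℝ≥0∞ :=
  ⨅ x : {x : Fin N → EuclideanSpace ℝ (Fin (d + 1)) //
    ∀ k, x k ∈ sphere (0 : EuclideanSpace ℝ (Fin (d + 1))) 1},
    ∑ j, ∑ k, if j ≠ k then edist (x.1 j) (x.1 k) ^ (-s) else 0


/-- The truncated Riesz kernel as a function of the distance. -/
def truncK (d : ℕ) (ε ρ : ℝ) : ℝ := ((max ρ ε) ^ d)⁻¹

lemma truncK_pos (d : ℕ) {ε : ℝ} (hε : 0 < ε) (ρ : ℝ) : 0 < truncK d ε ρ := by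
  unfold truncK
  have : 0 < max ρ ε := lt_max_of_lt_right hε
  positivity

lemma truncK_le (d : ℕ) {ε : ℝ} (hε : 0 < ε) (ρ : ℝ) : truncK d ε ρ ≤ (ε ^ d)⁻¹ := by
  unfold truncK
  gcongr
  exact le_max_right _ _

lemma continuous_truncK (d : ℕ) {ε : ℝ} (hε : 0 < ε) : Continuous (truncK d ε) := by
  unfold truncK
  refine Continuous.inv₀ (by fun_prop) (fun ρ => ?_)
  have : 0 < max ρ ε := lt_max_of_lt_right hε
  positivity

lemma integrable_truncK (d : ℕ) {ε : ℝ} (hε : 0 < ε) (ν : Measure ℝ) [IsFiniteMeasure ν] :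
    Integrable (truncK d ε) ν := by
  refine Integrable.of_bound (continuous_truncK d hε).aestronglyMeasurable ((ε ^ d)⁻¹)
    (ae_of_all _ fun ρ => ?_)
  rw [Real.norm_of_nonneg (truncK_pos d hε ρ).le]
  exact truncK_le d hε ρ

lemma lt_truncK_iff {d : ℕ} (hd : d ≠ 0) {ε : ℝ} (hε : 0 < ε) {t : ℝ} (ht : 0 < t) (ρ : ℝ) :
    t < truncK d ε ρ ↔ ρ < (t⁻¹) ^ ((d : ℝ)⁻¹) ∧ t < (ε ^ d)⁻¹ := by
  have hm : 0 < max ρ ε := lt_max_of_lt_right hε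
  have key : ∀ a : ℝ, 0 < a → (t < (a ^ d)⁻¹ ↔ a < (t⁻¹) ^ ((d : ℝ)⁻¹)) := by
    intro a ha
    rw [lt_inv_comm₀ ht (by positivity)]
    rw [Real.lt_rpow_inv_iff_of_pos ha.le (by positivity) (by positivity), Real.rpow_natCast]
  unfold truncK
  rw [key _ hm, key _ hε, max_lt_iff]

lemma truncK_integral_bounds {d : ℕ} (hd : d ≠ 0) (ν : Measure ℝ) [IsProbabilityMeasure ν] {κ : ℝ}
    (hlim : Tendsto (fun r : ℝ => ν.real (Set.Iio r) / r ^ d) (𝓝[>] 0) (𝓝 κ))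
    {δ : ℝ} (hδ : 0 < δ) :
    ∃ t₀ : ℝ, 1 ≤ t₀ ∧ ∀ ε : ℝ, 0 < ε → t₀ < (ε ^ d)⁻¹ →
      (κ - δ) * (Real.log ((ε ^ d)⁻¹) - Real.log t₀) ≤ ∫ ρ, truncK d ε ρ ∂ν ∧
      ∫ ρ, truncK d ε ρ ∂ν ≤ t₀ + (κ + δ) * (Real.log ((ε ^ d)⁻¹) - Real.log t₀) := by
  have h1 := (Metric.tendsto_nhds.1 hlim) δ hδ
  rw [eventually_nhdsWithin_iff, Metric.eventually_nhds_iff] at h1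
  obtain ⟨r₀, hr₀, h1⟩ := h1
  refine ⟨max 1 ((r₀ ^ d)⁻¹), le_max_left _ _, fun ε hε hT => ?_⟩
  set t₀ := max 1 ((r₀ ^ d)⁻¹) with ht₀
  set T := (ε ^ d)⁻¹ with hTdef
  have ht0 : 0 < t₀ := lt_of_lt_of_le one_pos (le_max_left _ _)
  set g : ℝ → ℝ := fun t => ν.real {ρ | t < truncK d ε ρ} with hg
  have ganti : Antitone g := by
    intro a b hab
    exact measureReal_mono (fun ρ (h : b < _) => lt_of_le_of_lt hab h)
  have hgi : ∀ a b, IntervalIntegrable g volume a b := fun a b => ganti.intervalIntegrable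
  have hG : ∫ ρ, truncK d ε ρ ∂ν = ∫ t in Set.Ioi 0, g t :=
    (integrable_truncK d hε ν).integral_eq_integral_meas_lt
      (ae_of_all _ fun ρ => (truncK_pos d hε ρ).le)
  have hg0 : ∀ t, T ≤ t → g t = 0 := by
    intro t ht
    have : {ρ | t < truncK d ε ρ} = ∅ := by
      ext ρ
      simp only [Set.mem_ofPred_eq, Set.mem_empty_iff_false, iff_false, not_lt]
      exact (truncK_le d hε ρ).trans ht
    simp [hg, this]
  have hG2 : ∫ t in Set.Ioi 0, g t = ∫ t in (0:ℝ)..T, g t := by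
    rw [intervalIntegral.integral_of_le (ht0.trans hT).le]
    apply setIntegral_eq_of_subset_of_forall_sdiff_eq_zero measurableSet_Ioi
      (fun x (hx : x ∈ Set.Ioc 0 T) => hx.1)
    intro x hx
    apply hg0
    by_contra h
    exact hx.2 ⟨hx.1, (not_le.1 h).le⟩
  have hsplit : ∫ t in (0:ℝ)..T, g t = (∫ t in (0:ℝ)..t₀, g t) + ∫ t in t₀..T, g t :=
    (intervalIntegral.integral_add_adjacent_intervals (hgi _ _) (hgi _ _)).symm
  have hA1 : 0 ≤ ∫ t in (0:ℝ)..t₀, g t :=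
    intervalIntegral.integral_nonneg ht0.le fun t _ => measureReal_nonneg
  have hA2 : ∫ t in (0:ℝ)..t₀, g t ≤ t₀ := by
    have := intervalIntegral.integral_mono_on ht0.le (hgi 0 t₀)
      (intervalIntegrable_const (c := (1:ℝ))) (fun t _ => measureReal_le_one)
    simpa using this
  have hmid : ∀ t ∈ Set.Ioo t₀ T, (κ - δ) * t⁻¹ ≤ g t ∧ g t ≤ (κ + δ) * t⁻¹ := by
    intro t ht
    have htp : 0 < t := ht0.trans ht.1
    set r := (t⁻¹) ^ ((d : ℝ)⁻¹) with hr
    have hrpos : 0 < r := by positivity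
    have hrd : r ^ d = t⁻¹ := by
      rw [hr, ← Real.rpow_natCast, ← Real.rpow_mul (by positivity), inv_mul_cancel₀ (by positivity),
        Real.rpow_one]
    have hset : {ρ | t < truncK d ε ρ} = Set.Iio r := by
      ext ρ
      simp only [Set.mem_ofPred_eq, Set.mem_Iio]
      rw [lt_truncK_iff hd hε htp]
      simp [ht.2, ← hTdef, ← hr]
    have hrr : r < r₀ := by
      have : r ^ d < r₀ ^ d := by
        rw [hrd, inv_lt_comm₀ htp (by positivity)]
        exact lt_of_le_of_lt (le_max_right _ _) ht.1
      exact lt_of_pow_lt_pow_left₀ d hr₀.le this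
    have h2 := h1 (y := r) (by simpa [abs_of_pos hrpos] using hrr) hrpos
    rw [Real.dist_eq, abs_lt, hrd] at h2
    have hgt : g t = ν.real (Set.Iio r) := by simp only [hg]; rw [hset]
    rw [hgt]
    have e : ν.real (Set.Iio r) = (ν.real (Set.Iio r) / t⁻¹) * t⁻¹ := by field_simp
    rw [e]
    constructor <;> apply mul_le_mul_of_nonneg_right _ (by positivity) <;> linarith
  have hinv : ∀ c : ℝ, IntervalIntegrable (fun t => c * t⁻¹) volume t₀ T := by
    intro c
    apply ContinuousOn.intervalIntegrable_of_Icc hT.le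
    refine continuousOn_const.mul (continuousOn_inv₀.mono ?_)
    intro t ht
    exact (ht0.trans_le ht.1).ne'
  have hval : ∀ c : ℝ, ∫ t in t₀..T, c * t⁻¹ = c * (Real.log T - Real.log t₀) := by
    intro c
    rw [intervalIntegral.integral_const_mul, integral_inv_of_pos ht0 (ht0.trans hT),
      Real.log_div (ht0.trans hT).ne' ht0.ne']
  have hB1 : (κ - δ) * (Real.log T - Real.log t₀) ≤ ∫ t in t₀..T, g t := by
    rw [← hval]
    exact intervalIntegral.integral_mono_on_of_le_Ioo hT.le (hinv _) (hgi _ _)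
      (fun t ht => (hmid t ht).1)
  have hB2 : ∫ t in t₀..T, g t ≤ (κ + δ) * (Real.log T - Real.log t₀) := by
    rw [← hval]
    exact intervalIntegral.integral_mono_on_of_le_Ioo hT.le (hgi _ _) (hinv _)
      (fun t ht => (hmid t ht).2)
  rw [hG, hG2, hsplit]
  constructor <;> linarith

lemma tendsto_inv_pow_atTop {d : ℕ} (hd : d ≠ 0) :
    Tendsto (fun ε : ℝ => (ε ^ d)⁻¹) (𝓝[>] 0) atTop := by
  have := (tendsto_pow_atTop (α := ℝ) hd).comp tendsto_inv_nhdsGT_zero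
  refine this.congr fun x => ?_
  simp

lemma truncK_integral_tendsto {d : ℕ} (hd : d ≠ 0) (ν : Measure ℝ) [IsProbabilityMeasure ν] {κ : ℝ}
    (hlim : Tendsto (fun r : ℝ => ν.real (Set.Iio r) / r ^ d) (𝓝[>] 0) (𝓝 κ)) :
    Tendsto (fun ε : ℝ => (∫ ρ, truncK d ε ρ ∂ν) / Real.log ((ε ^ d)⁻¹)) (𝓝[>] 0) (𝓝 κ) := by
  rw [Metric.tendsto_nhds]
  intro δ hδ
  obtain ⟨t₀, ht₀, h⟩ := truncK_integral_bounds hd ν hlim (half_pos hδ)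
  have hT := tendsto_inv_pow_atTop hd
  have hL := Real.tendsto_log_atTop.comp hT
  filter_upwards [self_mem_nhdsWithin, hT.eventually_gt_atTop t₀,
    hL.eventually_gt_atTop 0,
    hL.eventually_gt_atTop ((t₀ + (|κ| + δ) * Real.log t₀) / (δ / 2))] with ε hε hεT hL0 hL1
  obtain ⟨h1, h2⟩ := h ε hε hεT
  simp only [Function.comp_apply] at hL0 hL1
  set L := Real.log ((ε ^ d)⁻¹)
  set l := Real.log t₀
  have hl : 0 ≤ l := Real.log_nonneg ht₀
  rw [div_lt_iff₀ (by positivity)] at hL1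
  have := neg_abs_le κ
  have := le_abs_self κ
  rw [Real.dist_eq, abs_lt]
  have e : ∀ x : ℝ, x / L - κ = (x - κ * L) / L := by intro x; field_simp
  rw [e, lt_div_iff₀ hL0, div_lt_iff₀ hL0]
  constructor <;> nlinarith


/-- A probability measure on the sphere whose distance laws from all points of the sphere
coincide, with density `κ` of small caps. -/
structure CapMeasure (d : ℕ) (σ : Measure (EuclideanSpace ℝ (Fin (d + 1)))) (ν : Measure ℝ)
    (κ : ℝ) : Prop where
  prob : IsProbabilityMeasure σ
  supp : ∀ᵐ x ∂σ, x ∈ sphere (0 : EuclideanSpace ℝ (Fin (d + 1))) 1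
  law : ∀ x ∈ sphere (0 : EuclideanSpace ℝ (Fin (d + 1))) 1, σ.map (fun y => dist x y) = ν
  lim : Tendsto (fun r : ℝ => ν.real (Set.Iio r) / r ^ d) (𝓝[>] 0) (𝓝 κ)

lemma sphere_nonempty' (d : ℕ) :
    ∃ x, x ∈ sphere (0 : EuclideanSpace ℝ (Fin (d + 1))) 1 :=
  NormedSpace.sphere_nonempty.2 zero_le_one

lemma CapMeasure.prob_nu {d : ℕ} {σ : Measure (EuclideanSpace ℝ (Fin (d + 1)))} {ν : Measure ℝ}
    {κ : ℝ} (h : CapMeasure d σ ν κ) : IsProbabilityMeasure ν := by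
  obtain ⟨x, hx⟩ := sphere_nonempty' d
  have := h.prob
  rw [← h.law x hx]
  exact Measure.isProbabilityMeasure_map (by fun_prop)

lemma CapMeasure.integral_dist {d : ℕ} {σ : Measure (EuclideanSpace ℝ (Fin (d + 1)))}
    {ν : Measure ℝ} {κ : ℝ} (h : CapMeasure d σ ν κ) {f : ℝ → ℝ} (hf : Continuous f)
    {x : EuclideanSpace ℝ (Fin (d + 1))}
    (hx : x ∈ sphere (0 : EuclideanSpace ℝ (Fin (d + 1))) 1) :
    ∫ y, f (dist x y) ∂σ = ∫ ρ, f ρ ∂ν := by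
  rw [← h.law x hx, integral_map (by fun_prop) hf.aestronglyMeasurable]

lemma inner_eq_of_sphere {d : ℕ} {x y : EuclideanSpace ℝ (Fin (d + 1))}
    (hx : x ∈ sphere (0 : EuclideanSpace ℝ (Fin (d + 1))) 1)
    (hy : y ∈ sphere (0 : EuclideanSpace ℝ (Fin (d + 1))) 1) :
    ⟪x, y⟫ = 1 - (dist x y) ^ 2 / 2 := by
  rw [mem_sphere_zero_iff_norm] at hx hy
  rw [dist_eq_norm, @norm_sub_sq_real, hx, hy]
  ring

lemma abs_inner_le_one_of_sphere {d : ℕ} {x y : EuclideanSpace ℝ (Fin (d + 1))}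
    (hx : x ∈ sphere (0 : EuclideanSpace ℝ (Fin (d + 1))) 1)
    (hy : y ∈ sphere (0 : EuclideanSpace ℝ (Fin (d + 1))) 1) :
    |⟪x, y⟫| ≤ 1 := by
  rw [mem_sphere_zero_iff_norm] at hx hy
  simpa [hx, hy] using abs_real_inner_le_norm x y

lemma CapMeasure.integrable {d : ℕ} {σ : Measure (EuclideanSpace ℝ (Fin (d + 1)))}
    {ν : Measure ℝ} {κ : ℝ} (h : CapMeasure d σ ν κ) {f : EuclideanSpace ℝ (Fin (d + 1)) → ℝ}
    (hf : Continuous f) : Integrable f σ := by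
  have := h.prob
  obtain ⟨C, hC⟩ := (isCompact_sphere (0 : EuclideanSpace ℝ (Fin (d + 1))) 1).exists_bound_of_continuousOn
    hf.continuousOn
  refine Integrable.of_bound hf.aestronglyMeasurable C ?_
  filter_upwards [h.supp] with x hx using hC x hx

lemma inner_pow_expand {d n : ℕ} (x y : EuclideanSpace ℝ (Fin (d + 1))) :
    ⟪x, y⟫ ^ n = ∑ p : Fin n → Fin (d + 1), (∏ i, x (p i)) * ∏ i, y (p i) := by
  have : ⟪x, y⟫ = ∑ i, x i * y i := by
    rw [PiLp.inner_apply]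
    refine Finset.sum_congr rfl fun i _ => ?_
    simp [mul_comm]
  rw [this, Fintype.sum_pow]
  simp [Finset.prod_mul_distrib]

/-- Positive definiteness of powers of the inner product. -/
lemma CapMeasure.pow_ineq {d : ℕ} {σ : Measure (EuclideanSpace ℝ (Fin (d + 1)))}
    {ν : Measure ℝ} {κ : ℝ} (h : CapMeasure d σ ν κ) (n : ℕ) {N : ℕ}
    (x : Fin N → EuclideanSpace ℝ (Fin (d + 1)))
    (hx : ∀ k, x k ∈ sphere (0 : EuclideanSpace ℝ (Fin (d + 1))) 1) :
    (N : ℝ) ^ 2 * ∫ ρ, (1 - ρ ^ 2 / 2) ^ n ∂ν ≤ ∑ j, ∑ k, ⟪x j, x k⟫ ^ n := by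
  have := h.prob
  set I := ∫ ρ, (1 - ρ ^ 2 / 2) ^ n ∂ν with hI
  set a : (Fin n → Fin (d + 1)) → ℝ := fun p => ∫ y, ∏ i, y (p i) ∂σ with ha
  have hint : ∀ p : Fin n → Fin (d + 1),
      Integrable (fun y : EuclideanSpace ℝ (Fin (d + 1)) => ∏ i, y (p i)) σ := fun p =>
    h.integrable (by fun_prop)
  have h1 : ∀ z ∈ sphere (0 : EuclideanSpace ℝ (Fin (d + 1))) 1,
      ∑ p : Fin n → Fin (d + 1), (∏ i, z (p i)) * a p = I := by
    intro z hz
    have e1 : ∫ y, ⟪z, y⟫ ^ n ∂σ = I := by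
      rw [hI, ← h.integral_dist (f := fun ρ => (1 - ρ ^ 2 / 2) ^ n) (by fun_prop) hz]
      refine integral_congr_ae ?_
      filter_upwards [h.supp] with y hy
      simp only [inner_eq_of_sphere hz hy]
    rw [← e1]
    simp_rw [inner_pow_expand]
    rw [integral_finsetSum _ (fun p _ => (hint p).const_mul _)]
    simp_rw [integral_const_mul]
    rfl
  have h2 : ∑ p, a p * a p = I := by
    have e1 : ∫ z, ∑ p : Fin n → Fin (d + 1), (∏ i, z (p i)) * a p ∂σ = I := by
      rw [integral_congr_ae (g := fun _ => I)]
      · simp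
      · filter_upwards [h.supp] with z hz using h1 z hz
    rw [← e1, integral_finsetSum _ (fun p _ => (hint p).mul_const _)]
    simp_rw [integral_mul_const]
    rfl
  have h3 : 0 ≤ ∑ p : Fin n → Fin (d + 1), (∑ j, ∏ i, x j (p i) - N * a p) ^ 2 :=
    Finset.sum_nonneg fun p _ => sq_nonneg _
  have h4 : ∑ p : Fin n → Fin (d + 1), (∑ j, ∏ i, x j (p i) - N * a p) ^ 2
      = (∑ j, ∑ k, ⟪x j, x k⟫ ^ n) - 2 * N * (N * I) + N ^ 2 * I := by
    have e1 : ∑ p : Fin n → Fin (d + 1), (∑ j, ∏ i, x j (p i)) ^ 2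
        = ∑ j, ∑ k, ⟪x j, x k⟫ ^ n := by
      simp_rw [inner_pow_expand, sq, Finset.sum_mul_sum]
      rw [Finset.sum_comm]
      refine Finset.sum_congr rfl fun j _ => ?_
      rw [Finset.sum_comm]
    have e2 : ∑ p : Fin n → Fin (d + 1), (∑ j, ∏ i, x j (p i)) * a p = N * I := by
      simp_rw [Finset.sum_mul]
      rw [Finset.sum_comm]
      simp_rw [h1 _ (hx _)]
      simp
    rw [← e1, ← e2, ← h2, Finset.mul_sum, Finset.mul_sum, ← Finset.sum_sub_distrib,
      ← Finset.sum_add_distrib]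
    refine Finset.sum_congr rfl fun p _ => ?_
    ring
  rw [h4] at h3
  linarith

/-- The regularized Riesz kernel, as a function of the inner product. -/
def regK (d : ℕ) (ε t : ℝ) : ℝ := (2 + ε ^ 2 - 2 * t) ^ (-((d : ℝ) / 2))



lemma choose_nonneg_aux {a : ℝ} (ha : 0 < a) (n : ℕ) : 0 ≤ Ring.choose (a + n - 1) n := by
  have h : Ring.choose (a + n - 1) n = Ring.multichoose a n := by
    rw [Ring.choose]; congr 1; ring
  have h2 := Ring.factorial_nsmul_multichoose_eq_ascPochhammer a n
  rw [Polynomial.ascPochhammer_smeval_eq_eval, nsmul_eq_mul] at h2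
  have h3 := ascPochhammer_pos n a ha
  rw [h]
  rw [← h2] at h3
  exact (pos_of_mul_pos_right h3 (by positivity)).le

lemma regK_series {d : ℕ} (hd : d ≠ 0) {ε : ℝ} (hε : 0 < ε) :
    ∃ b : ℕ → ℝ, (∀ n, 0 ≤ b n) ∧ Summable b ∧
    ∀ t : ℝ, |t| ≤ 1 → HasSum (fun n => b n * t ^ n) (regK d ε t) := by
  set A := 2 + ε ^ 2 with hA
  have hA2 : 2 < A := by have := pow_pos hε 2; linarith
  set α : ℝ := (d : ℝ) / 2 with hα
  have hα0 : 0 < α := by positivity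
  have key : ∀ t : ℝ, |t| ≤ 1 →
      HasSum (fun n : ℕ => (A ^ (-α) * Ring.choose (α + n - 1) n * (2 / A) ^ n) * t ^ n)
        (regK d ε t) := by
    intro t ht
    have hu : |2 / A * t| < 1 := by
      rw [abs_mul, abs_of_pos (by positivity)]
      have : 2 / A < 1 := by rw [div_lt_one (by linarith)]; exact hA2
      have h0 : 0 ≤ 2 / A := by positivity
      nlinarith [abs_nonneg t]
    have h1 := (Real.one_div_one_sub_rpow_hasFPowerSeriesOnBall_zero α).hasSum
      (y := 2 / A * t) (by
        rw [Metric.mem_eball, edist_zero_right, ← ofReal_norm, Real.norm_eq_abs,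
          ENNReal.ofReal_lt_one]
        exact hu)
    have h2 := h1.mul_left (A ^ (-α))
    have e1 : (fun n : ℕ => (A ^ (-α) * Ring.choose (α + n - 1) n * (2 / A) ^ n) * t ^ n) =
        fun n : ℕ => A ^ (-α) * (FormalMultilinearSeries.ofScalars ℝ
          (fun n : ℕ => Ring.choose (α + n - 1) n) n) fun _ => 2 / A * t := by
      ext n
      rw [FormalMultilinearSeries.ofScalars_apply_eq, smul_eq_mul, mul_pow]
      ring
    have e2 : regK d ε t = A ^ (-α) * (1 / (1 - (0 + 2 / A * t)) ^ α) := by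
      rw [abs_lt] at hu
      rw [regK, zero_add, one_div, ← Real.rpow_neg (by linarith), ← Real.mul_rpow (by linarith)
        (by linarith)]
      congr 1
      field_simp
      rw [← hA]
    rw [e1, e2]
    exact h2
  refine ⟨fun n => A ^ (-α) * Ring.choose (α + n - 1) n * (2 / A) ^ n, fun n => ?_, ?_, key⟩
  · have := choose_nonneg_aux hα0 n
    positivity
  · simpa using (key 1 (by simp)).summable

lemma regK_ineq {d : ℕ} (hd : d ≠ 0) {σ : Measure (EuclideanSpace ℝ (Fin (d + 1)))}
    {ν : Measure ℝ} {κ : ℝ} (h : CapMeasure d σ ν κ) {ε : ℝ} (hε : 0 < ε) {N : ℕ}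
    (x : Fin N → EuclideanSpace ℝ (Fin (d + 1)))
    (hx : ∀ k, x k ∈ sphere (0 : EuclideanSpace ℝ (Fin (d + 1))) 1)
    {x₀ : EuclideanSpace ℝ (Fin (d + 1))}
    (hx₀ : x₀ ∈ sphere (0 : EuclideanSpace ℝ (Fin (d + 1))) 1) :
    (N : ℝ) ^ 2 * ∫ y, regK d ε ⟪x₀, y⟫ ∂σ ≤ ∑ j, ∑ k, regK d ε ⟪x j, x k⟫ := by
  have := h.prob
  obtain ⟨b, hb, hbs, hbt⟩ := regK_series hd hε
  have hI : ∀ n : ℕ, ∫ y, ⟪x₀, y⟫ ^ n ∂σ = ∫ ρ, (1 - ρ ^ 2 / 2) ^ n ∂ν := by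
    intro n
    rw [← h.integral_dist (f := fun ρ => (1 - ρ ^ 2 / 2) ^ n) (by fun_prop) hx₀]
    refine integral_congr_ae ?_
    filter_upwards [h.supp] with y hy
    simp only [inner_eq_of_sphere hx₀ hy]
  have h1 : HasSum (fun n => ∫ y, b n * ⟪x₀, y⟫ ^ n ∂σ) (∫ y, regK d ε ⟪x₀, y⟫ ∂σ) := by
    refine hasSum_integral_of_dominated_convergence (fun n _ => b n) (fun n => ?_) (fun n => ?_)
      (ae_of_all _ fun _ => hbs) (integrable_const _) ?_
    · exact Continuous.aestronglyMeasurable (by fun_prop)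
    · filter_upwards [h.supp] with y hy
      rw [norm_mul, norm_pow, Real.norm_of_nonneg (hb n), Real.norm_eq_abs]
      exact mul_le_of_le_one_right (hb n)
        (pow_le_one₀ (abs_nonneg _) (abs_inner_le_one_of_sphere hx₀ hy))
    · filter_upwards [h.supp] with y hy using hbt _ (abs_inner_le_one_of_sphere hx₀ hy)
  have h2 := h1.mul_left ((N : ℝ) ^ 2)
  have h3 : HasSum (fun n => ∑ j, ∑ k, b n * ⟪x j, x k⟫ ^ n) (∑ j, ∑ k, regK d ε ⟪x j, x k⟫) :=
    hasSum_sum fun j _ => hasSum_sum fun k _ =>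
      hbt _ (abs_inner_le_one_of_sphere (hx j) (hx k))
  refine hasSum_le (fun n => ?_) h2 h3
  rw [integral_const_mul, hI]
  have := mul_le_mul_of_nonneg_left (h.pow_ineq n x hx) (hb n)
  simp_rw [Finset.mul_sum] at this
  linarith

lemma regK_inner {d : ℕ} {x y : EuclideanSpace ℝ (Fin (d + 1))}
    (hx : x ∈ sphere (0 : EuclideanSpace ℝ (Fin (d + 1))) 1)
    (hy : y ∈ sphere (0 : EuclideanSpace ℝ (Fin (d + 1))) 1) (ε : ℝ) :
    regK d ε ⟪x, y⟫ = ((dist x y) ^ 2 + ε ^ 2) ^ (-((d : ℝ) / 2)) := by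
  rw [regK, inner_eq_of_sphere hx hy]
  congr 1
  ring

lemma sq_rpow_neg_half (d : ℕ) {m : ℝ} (hm : 0 ≤ m) :
    (m ^ 2) ^ (-((d : ℝ) / 2)) = (m ^ d)⁻¹ := by
  rw [← Real.rpow_natCast m 2, ← Real.rpow_mul hm, ← Real.rpow_natCast m d, ← Real.rpow_neg hm]
  congr 1
  push_cast
  ring

lemma truncK_le_regK {d : ℕ} {ε M ρ : ℝ} (hε : 0 < ε) (hM : 0 < M) (hρ : 0 ≤ ρ) :
    (1 + 1 / M ^ 2) ^ (-((d : ℝ) / 2)) * truncK d (M * ε) ρ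
      ≤ (ρ ^ 2 + ε ^ 2) ^ (-((d : ℝ) / 2)) := by
  have hm : 0 < max ρ (M * ε) := lt_max_of_lt_right (by positivity)
  rw [truncK, ← sq_rpow_neg_half d hm.le, ← Real.mul_rpow (by positivity) (by positivity)]
  apply Real.rpow_le_rpow_of_nonpos (by positivity)
  · have h1 : ρ ^ 2 ≤ (max ρ (M * ε)) ^ 2 := by gcongr; exact le_max_left _ _
    have h2 : (M * ε) ^ 2 ≤ (max ρ (M * ε)) ^ 2 := by gcongr; exact le_max_right _ _
    have h3 : ε ^ 2 = 1 / M ^ 2 * (M * ε) ^ 2 := by field_simp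
    have : 1 / M ^ 2 * (M * ε) ^ 2 ≤ 1 / M ^ 2 * (max ρ (M * ε)) ^ 2 := by gcongr
    nlinarith
  · have : (0 : ℝ) ≤ d / 2 := by positivity
    linarith

lemma edist_term {d : ℕ} (x y : EuclideanSpace ℝ (Fin (d + 1))) (hxy : x ≠ y) :
    edist x y ^ (-(d : ℝ)) = ENNReal.ofReal ((dist x y ^ d)⁻¹) := by
  have : 0 < dist x y := dist_pos.2 hxy
  rw [edist_dist, ENNReal.ofReal_rpow_of_pos this, Real.rpow_neg this.le, Real.rpow_natCast]

lemma energy_lower {d : ℕ} (hd : d ≠ 0) {σ : Measure (EuclideanSpace ℝ (Fin (d + 1)))}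
    {ν : Measure ℝ} {κ : ℝ} (h : CapMeasure d σ ν κ) {ε M : ℝ} (hε : 0 < ε) (hM : 0 < M) (N : ℕ) :
    ENNReal.ofReal ((N : ℝ) ^ 2 * ((1 + 1 / M ^ 2) ^ (-((d : ℝ) / 2)) *
      ∫ ρ, truncK d (M * ε) ρ ∂ν) - N * (ε ^ d)⁻¹) ≤ minRieszEnergy d d N := by
  have := h.prob
  have := h.prob_nu
  obtain ⟨x₀, hx₀⟩ := sphere_nonempty' d
  set c := (1 + 1 / M ^ 2) ^ (-((d : ℝ) / 2)) with hc
  have h1 : c * ∫ ρ, truncK d (M * ε) ρ ∂ν ≤ ∫ y, regK d ε ⟪x₀, y⟫ ∂σ := by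
    rw [← h.integral_dist (continuous_truncK d (by positivity)) hx₀, ← integral_const_mul]
    apply integral_mono_ae
    · exact (h.integrable ((continuous_truncK d (by positivity)).comp (by fun_prop))).const_mul _
    · have : (fun y => regK d ε ⟪x₀, y⟫) =ᵐ[σ]
          fun y => ((dist x₀ y) ^ 2 + ε ^ 2) ^ (-((d : ℝ) / 2)) := by
        filter_upwards [h.supp] with y hy using regK_inner hx₀ hy ε
      rw [integrable_congr this]
      apply h.integrable
      refine Continuous.rpow_const (by fun_prop) (fun y => Or.inl ?_)
      positivity
    · filter_upwards [h.supp] with y hy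
      simp only [regK_inner hx₀ hy]
      exact truncK_le_regK hε hM dist_nonneg
  refine le_iInf fun x => ?_
  obtain ⟨x, hx⟩ := x
  have h2 := regK_ineq hd h hε x hx hx₀
  have hpos : ∀ j k, 0 ≤ regK d ε ⟪x j, x k⟫ := by
    intro j k
    rw [regK_inner (hx j) (hx k)]
    positivity
  have h3 : ∑ j, ∑ k, regK d ε ⟪x j, x k⟫ =
      (∑ j, ∑ k, if j ≠ k then regK d ε ⟪x j, x k⟫ else 0) + N * (ε ^ d)⁻¹ := by
    have e : ∀ j : Fin N, ∑ k, regK d ε ⟪x j, x k⟫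
        = (∑ k, if j ≠ k then regK d ε ⟪x j, x k⟫ else 0) + (ε ^ d)⁻¹ := by
      intro j
      have e1 : (ε ^ d)⁻¹ = ∑ k, if j = k then regK d ε ⟪x j, x k⟫ else 0 := by
        rw [Finset.sum_ite_eq]
        simp only [Finset.mem_univ, if_true]
        rw [regK_inner (hx j) (hx j), dist_self, ← sq_rpow_neg_half d hε.le]
        simp
      rw [e1, ← Finset.sum_add_distrib]
      refine Finset.sum_congr rfl fun k _ => ?_
      by_cases hjk : j = k <;> simp [hjk]
    simp_rw [e]
    rw [Finset.sum_add_distrib]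
    simp
  calc ENNReal.ofReal ((N : ℝ) ^ 2 * (c * ∫ ρ, truncK d (M * ε) ρ ∂ν) - N * (ε ^ d)⁻¹)
      ≤ ENNReal.ofReal (∑ j, ∑ k, if j ≠ k then regK d ε ⟪x j, x k⟫ else 0) := by
        apply ENNReal.ofReal_le_ofReal
        have := mul_le_mul_of_nonneg_left h1 (sq_nonneg (N : ℝ))
        linarith
    _ = ∑ j, ∑ k, ENNReal.ofReal (if j ≠ k then regK d ε ⟪x j, x k⟫ else 0) := by
        rw [ENNReal.ofReal_sum_of_nonneg]
        · refine Finset.sum_congr rfl fun j _ => ?_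
          rw [ENNReal.ofReal_sum_of_nonneg]
          intro k _
          split_ifs
          · exact hpos j k
          · exact le_rfl
        · intro j _
          refine Finset.sum_nonneg fun k _ => ?_
          split_ifs
          · exact hpos j k
          · exact le_rfl
    _ ≤ _ := by
        refine Finset.sum_le_sum fun j _ => Finset.sum_le_sum fun k _ => ?_
        split_ifs with hjk
        · by_cases hxx : x j = x k
          · simp only [hxx, edist_self]
            rw [ENNReal.zero_rpow_of_neg (by simp; omega)]
            exact le_top
          · rw [edist_term _ _ hxx]
            apply ENNReal.ofReal_le_ofReal
            rw [regK_inner (hx j) (hx k), ← sq_rpow_neg_half d dist_nonneg]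
            have := dist_pos.2 hxx
            apply Real.rpow_le_rpow_of_nonpos (by positivity)
            · nlinarith [sq_nonneg ε]
            · have : (0 : ℝ) ≤ d / 2 := by positivity
              linarith
        · simp


lemma exists_good_point {d : ℕ} {σ : Measure (EuclideanSpace ℝ (Fin (d + 1)))}
    {ν : Measure ℝ} {κ : ℝ} (h : CapMeasure d σ ν κ) {ε η : ℝ} (hε : 0 < ε) (hη : η < 1) {n : ℕ}
    (hn : n * ν.real (Set.Iio ε) ≤ η) (x : Fin n → EuclideanSpace ℝ (Fin (d + 1)))
    (hx : ∀ k, x k ∈ sphere (0 : EuclideanSpace ℝ (Fin (d + 1))) 1) :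
    ∃ z ∈ sphere (0 : EuclideanSpace ℝ (Fin (d + 1))) 1, (∀ k, ε ≤ dist (x k) z) ∧
      ∑ k, (dist (x k) z ^ d)⁻¹ ≤ n * ((∫ ρ, truncK d ε ρ ∂ν) / (1 - η)) := by
  have := h.prob
  have := h.prob_nu
  set U : Set (EuclideanSpace ℝ (Fin (d + 1))) := ⋃ k, {z | dist (x k) z < ε} with hU
  set D : Set (EuclideanSpace ℝ (Fin (d + 1))) := sphere 0 1 \ U with hD
  have hUm : MeasurableSet U := MeasurableSet.iUnion fun k =>
    (isOpen_lt (by fun_prop) (by fun_prop)).measurableSet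
  have hU1 : σ.real U ≤ η := by
    refine le_trans (measureReal_iUnion_fintype_le _) ?_
    have : ∀ k, σ.real {z | dist (x k) z < ε} = ν.real (Set.Iio ε) := by
      intro k
      rw [← h.law (x k) (hx k), map_measureReal_apply (by fun_prop) measurableSet_Iio]
      rfl
    simp_rw [this]
    simpa using hn
  have hS : σ.real (sphere (0 : EuclideanSpace ℝ (Fin (d + 1))) 1) = 1 := by
    have h0 : σ (sphere (0 : EuclideanSpace ℝ (Fin (d + 1))) 1) = 1 :=
      mem_ae_iff_prob_eq_one₀ isClosed_sphere.measurableSet.nullMeasurableSet |>.1 h.supp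
    rw [measureReal_def, h0, ENNReal.toReal_one]
  have hDr : 1 - η ≤ σ.real D := by
    have := le_measureReal_sdiff (μ := σ) (s₂ := U)
      (s₁ := sphere (0 : EuclideanSpace ℝ (Fin (d + 1))) 1)
    rw [hS] at this
    linarith
  have hD0 : 0 < σ.real D := by linarith
  set f : EuclideanSpace ℝ (Fin (d + 1)) → ℝ := fun z => ∑ k, truncK d ε (dist (x k) z) with hf
  have hfi1 : ∀ k, Integrable (fun z => truncK d ε (dist (x k) z)) σ := fun k =>
    h.integrable ((continuous_truncK d hε).comp (by fun_prop))
  have hfi : Integrable f σ := integrable_finsetSum _ fun k _ => hfi1 k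
  have hf0 : ∀ z, 0 ≤ f z := fun z => Finset.sum_nonneg fun k _ => (truncK_pos d hε _).le
  have hfint : ∫ z, f z ∂σ = n * ∫ ρ, truncK d ε ρ ∂ν := by
    rw [hf, integral_finsetSum _ fun k _ => hfi1 k]
    simp_rw [fun k => h.integral_dist (continuous_truncK d hε) (hx k)]
    simp
  obtain ⟨z, hz, hzf⟩ := exists_le_setAverage (μ := σ) (s := D) (f := f)
    (by intro h0; rw [measureReal_def, h0] at hD0; simp at hD0) (measure_ne_top _ _) hfi.integrableOn
  have hzk : ∀ k, ε ≤ dist (x k) z := by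
    intro k
    by_contra hlt
    exact hz.2 (Set.mem_iUnion.2 ⟨k, not_le.1 hlt⟩)
  refine ⟨z, hz.1, hzk, ?_⟩
  have e : ∑ k, (dist (x k) z ^ d)⁻¹ = f z := by
    refine Finset.sum_congr rfl fun k _ => ?_
    rw [truncK, max_eq_left (hzk k)]
  rw [e]
  refine hzf.trans ?_
  rw [setAverage_eq, smul_eq_mul]
  have h1 : ∫ z in D, f z ∂σ ≤ ∫ z, f z ∂σ :=
    setIntegral_le_integral hfi (ae_of_all _ hf0)
  rw [hfint] at h1
  have h2 : 0 ≤ ∫ z in D, f z ∂σ := integral_nonneg hf0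
  have h3 : 0 < 1 - η := by linarith
  have h4 : (σ.real D)⁻¹ ≤ (1 - η)⁻¹ := inv_anti₀ h3 hDr
  have h5 := mul_le_mul h4 h1 h2 (inv_nonneg.2 h3.le)
  refine h5.trans (le_of_eq ?_)
  rw [div_eq_inv_mul, mul_left_comm]

lemma exists_config {d : ℕ} {σ : Measure (EuclideanSpace ℝ (Fin (d + 1)))}
    {ν : Measure ℝ} {κ : ℝ} (h : CapMeasure d σ ν κ) {ε η : ℝ} (hε : 0 < ε) (hη : η < 1) {N : ℕ}
    (hN : N * ν.real (Set.Iio ε) ≤ η) (n : ℕ) (hn : n ≤ N) :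
    ∃ x : Fin n → EuclideanSpace ℝ (Fin (d + 1)),
      (∀ k, x k ∈ sphere (0 : EuclideanSpace ℝ (Fin (d + 1))) 1) ∧
      ∑ j, ∑ k, (if j ≠ k then edist (x j) (x k) ^ (-(d : ℝ)) else 0) ≤
        ENNReal.ofReal ((n : ℝ) * (n - 1) * ((∫ ρ, truncK d ε ρ ∂ν) / (1 - η))) := by
  set A := (∫ ρ, truncK d ε ρ ∂ν) / (1 - η) with hA
  have hA0 : 0 ≤ A := div_nonneg (integral_nonneg fun ρ => (truncK_pos d hε ρ).le) (by linarith)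
  induction n with
  | zero => exact ⟨fun k => k.elim0, fun k => k.elim0, by simp⟩
  | succ n ih =>
    obtain ⟨x, hx, hE⟩ := ih (by omega)
    have hn' : n * ν.real (Set.Iio ε) ≤ η := by
      refine le_trans ?_ hN
      gcongr
      omega
    obtain ⟨z, hz, hzk, hzs⟩ := exists_good_point h hε hη hn' x hx
    refine ⟨Fin.cons z x, fun k => ?_, ?_⟩
    · refine Fin.cases ?_ (fun i => ?_) k
      · simpa using hz
      · simpa using hx i
    · have hne : ∀ k, x k ≠ z := fun k => dist_pos.1 (hε.trans_le (hzk k))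
      have hs : ∑ k, edist (x k) z ^ (-(d : ℝ)) ≤ ENNReal.ofReal (n * A) := by
        simp_rw [fun k => edist_term (x k) z (hne k)]
        rw [← ENNReal.ofReal_sum_of_nonneg (fun k _ => by positivity)]
        exact ENNReal.ofReal_le_ofReal hzs
      simp only [Fin.sum_univ_succ, Fin.cons_zero, Fin.cons_succ]
      simp only [ne_eq, not_true_eq_false, if_false, zero_add, Fin.succ_inj, Finset.sum_add_distrib,
        (Fin.succ_ne_zero _).symm, Fin.succ_ne_zero, not_false_eq_true, if_true]
      simp_rw [edist_comm z]
      calc _ ≤ ENNReal.ofReal (n * A) + (ENNReal.ofReal (n * A) +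
            ENNReal.ofReal ((n : ℝ) * (n - 1) * A)) := by
              gcongr
        _ = _ := by
            have h3 : (0 : ℝ) ≤ (n : ℝ) * (n - 1) * A := by
              rcases Nat.eq_zero_or_pos n with h0 | h0
              · simp [h0]
              · have : (1 : ℝ) ≤ n := by exact_mod_cast h0
                have : (0 : ℝ) ≤ n - 1 := by linarith
                positivity
            rw [← ENNReal.ofReal_add (by positivity) h3,
              ← ENNReal.ofReal_add (by positivity) (by positivity)]
            congr 1
            push_cast
            ring

lemma energy_upper {d : ℕ} {σ : Measure (EuclideanSpace ℝ (Fin (d + 1)))}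
    {ν : Measure ℝ} {κ : ℝ} (h : CapMeasure d σ ν κ) {ε η : ℝ} (hε : 0 < ε) (hη : η < 1) {N : ℕ}
    (hN : N * ν.real (Set.Iio ε) ≤ η) :
    minRieszEnergy d d N ≤
        ENNReal.ofReal ((N : ℝ) ^ 2 * ((∫ ρ, truncK d ε ρ ∂ν) / (1 - η))) := by
  obtain ⟨x, hx, hE⟩ := exists_config h hε hη hN N le_rfl
  have h1 : minRieszEnergy d d N ≤
      ∑ j, ∑ k, (if j ≠ k then edist (x j) (x k) ^ (-(d : ℝ)) else 0) :=
    iInf_le (fun x : {x : Fin N → EuclideanSpace ℝ (Fin (d + 1)) //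
      ∀ k, x k ∈ sphere (0 : EuclideanSpace ℝ (Fin (d + 1))) 1} =>
      ∑ j, ∑ k, if j ≠ k then edist (x.1 j) (x.1 k) ^ (-(d : ℝ)) else 0) ⟨x, hx⟩
  refine h1.trans (hE.trans (ENNReal.ofReal_le_ofReal ?_))
  have hA0 : 0 ≤ (∫ ρ, truncK d ε ρ ∂ν) / (1 - η) :=
    div_nonneg (integral_nonneg fun ρ => (truncK_pos d hε ρ).le) (by linarith)
  apply mul_le_mul_of_nonneg_right _ hA0
  have : (0 : ℝ) ≤ N := by positivity
  nlinarith

lemma tendsto_log_mul_div_log {a : ℝ} (ha : 0 < a) :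
    Tendsto (fun N : ℕ => Real.log (a * N) / Real.log N) atTop (𝓝 1) := by
  have hL : Tendsto (fun N : ℕ => Real.log (N : ℝ)) atTop atTop :=
    Real.tendsto_log_atTop.comp tendsto_natCast_atTop_atTop
  have h1 : Tendsto (fun N : ℕ => Real.log a / Real.log N + 1) atTop (𝓝 (0 + 1)) :=
    (hL.const_div_atTop _).add_const 1
  rw [zero_add] at h1
  refine h1.congr' ?_
  filter_upwards [hL.eventually_gt_atTop 0, eventually_gt_atTop 0] with N hN hN0
  have : (N : ℝ) ≠ 0 := by positivity
  rw [Real.log_mul ha.ne' this]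
  field_simp

lemma seq_tendsto_zero {d : ℕ} {a : ℝ} (ha : 0 < a) {e : ℕ → ℝ}
    (he : ∀ N, 1 ≤ N → 0 < e N ∧ (e N ^ d)⁻¹ = a * N) :
    Tendsto e atTop (𝓝[>] 0) := by
  rw [tendsto_nhdsWithin_iff]
  refine ⟨?_, eventually_atTop.2 ⟨1, fun N hN => (he N hN).1⟩⟩
  rw [Metric.tendsto_nhds]
  intro r hr
  have h1 : Tendsto (fun N : ℕ => a * (N : ℝ)) atTop atTop :=
    tendsto_natCast_atTop_atTop.const_mul_atTop ha
  filter_upwards [h1.eventually_gt_atTop ((r ^ d)⁻¹), eventually_ge_atTop 1] with N hN hN1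
  obtain ⟨h2, h3⟩ := he N hN1
  rw [← h3, inv_lt_inv₀ (by positivity) (by positivity)] at hN
  rw [Real.dist_eq, sub_zero, abs_of_pos h2]
  exact lt_of_pow_lt_pow_left₀ d hr.le hN

lemma seq_G_tendsto {d : ℕ} (hd : d ≠ 0) {σ : Measure (EuclideanSpace ℝ (Fin (d + 1)))}
    {ν : Measure ℝ} {κ : ℝ} (h : CapMeasure d σ ν κ) {a : ℝ} (ha : 0 < a) {e : ℕ → ℝ}
    (he : ∀ N, 1 ≤ N → 0 < e N ∧ (e N ^ d)⁻¹ = a * N) :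
    Tendsto (fun N : ℕ => (∫ ρ, truncK d (e N) ρ ∂ν) / Real.log N) atTop (𝓝 κ) := by
  have := h.prob_nu
  have h1 := (truncK_integral_tendsto hd ν h.lim).comp (seq_tendsto_zero ha he)
  have h2 := h1.mul (tendsto_log_mul_div_log ha)
  rw [mul_one] at h2
  refine h2.congr' ?_
  have h3 : Tendsto (fun N : ℕ => Real.log (a * N)) atTop atTop :=
    Real.tendsto_log_atTop.comp (tendsto_natCast_atTop_atTop.const_mul_atTop ha)
  filter_upwards [h3.eventually_gt_atTop 0, eventually_ge_atTop 1] with N hN hN1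
  simp only [Function.comp_apply]
  rw [(he N hN1).2]
  field_simp

lemma exists_seq {d : ℕ} (hd : d ≠ 0) {a : ℝ} (ha : 0 < a) :
    ∃ e : ℕ → ℝ, ∀ N, 1 ≤ N → 0 < e N ∧ (e N ^ d)⁻¹ = a * N := by
  refine ⟨fun N => ((a * N)⁻¹) ^ ((d : ℝ)⁻¹), fun N hN => ?_⟩
  have : (0 : ℝ) < N := by exact_mod_cast hN
  refine ⟨by positivity, ?_⟩
  rw [← Real.rpow_natCast, ← Real.rpow_mul (by positivity), inv_mul_cancel₀ (by positivity),
    Real.rpow_one, inv_inv]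

theorem energy_tendsto {d : ℕ} (hd : d ≠ 0) {σ : Measure (EuclideanSpace ℝ (Fin (d + 1)))}
    {ν : Measure ℝ} {κ : ℝ} (h : CapMeasure d σ ν κ) :
    Tendsto (fun N : ℕ =>
        (minRieszEnergy d d N).toReal / ((N : ℝ) ^ 2 * Real.log N)) atTop (𝓝 κ) := by
  have := h.prob_nu
  have hL : Tendsto (fun N : ℕ => Real.log (N : ℝ)) atTop atTop :=
    Real.tendsto_log_atTop.comp tendsto_natCast_atTop_atTop
  have up : ∀ η : ℝ, 0 < η → η < 1 → ∃ G : ℕ → ℝ, Tendsto G atTop (𝓝 (κ / (1 - η))) ∧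
      ∀ᶠ N : ℕ in atTop, minRieszEnergy d d N ≠ ⊤ ∧
        (minRieszEnergy d d N).toReal / ((N : ℝ) ^ 2 * Real.log N) ≤ G N := by
    intro η hη hη1
    have ha : 0 < (|κ| + 1) / η := by positivity
    obtain ⟨e, he⟩ := exists_seq hd ha
    refine ⟨_, (seq_G_tendsto hd h ha he).div_const (1 - η), ?_⟩
    have h1 := h.lim.comp (seq_tendsto_zero ha he)
    have h2 := h1.eventually_lt_const (show κ < |κ| + 1 by linarith [le_abs_self κ])
    filter_upwards [h2, hL.eventually_gt_atTop 0, eventually_ge_atTop 1] with N h3 hN hN1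
    obtain ⟨h4, h5⟩ := he N hN1
    have hNp : (0 : ℝ) < N := by exact_mod_cast hN1
    simp only [Function.comp_apply] at h3
    rw [div_eq_mul_inv, h5] at h3
    have h6 : N * ν.real (Set.Iio (e N)) ≤ η := by
      have h7 : ν.real (Set.Iio (e N)) * ((|κ| + 1) / η * N)
        = (N * ν.real (Set.Iio (e N))) * (|κ| + 1) / η := by ring
      rw [h7, div_lt_iff₀ hη] at h3
      have : 0 < |κ| + 1 := by positivity
      nlinarith
    have h8 := energy_upper h h4 hη1 h6
    refine ⟨ne_top_of_le_ne_top ENNReal.ofReal_ne_top h8, ?_⟩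
    have hA0 : 0 ≤ (∫ ρ, truncK d (e N) ρ ∂ν) / (1 - η) :=
      div_nonneg (integral_nonneg fun ρ => (truncK_pos d h4 ρ).le) (by linarith)
    have h9 := ENNReal.toReal_mono ENNReal.ofReal_ne_top h8
    rw [ENNReal.toReal_ofReal (by positivity)] at h9
    rw [div_le_iff₀ (by positivity)]
    refine h9.trans (le_of_eq ?_)
    field_simp
  have low : ∀ M : ℝ, 0 < M → ∃ G : ℕ → ℝ,
      Tendsto G atTop (𝓝 ((1 + 1 / M ^ 2) ^ (-((d : ℝ) / 2)) * κ)) ∧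
      ∀ᶠ N : ℕ in atTop,
        G N ≤ (minRieszEnergy d d N).toReal / ((N : ℝ) ^ 2 * Real.log N) := by
    intro M hM
    obtain ⟨e, he⟩ := exists_seq hd (one_pos)
    set c := (1 + 1 / M ^ 2) ^ (-((d : ℝ) / 2)) with hc
    have he2 : ∀ N, 1 ≤ N → 0 < M * e N ∧ ((M * e N) ^ d)⁻¹ = (M ^ d)⁻¹ * N := by
      intro N hN
      obtain ⟨h1, h2⟩ := he N hN
      refine ⟨by positivity, ?_⟩
      rw [mul_pow, mul_inv, h2, one_mul]
    refine ⟨fun N => c * ((∫ ρ, truncK d (M * e N) ρ ∂ν) / Real.log N) - 1 / Real.log N, ?_, ?_⟩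
    · have := ((seq_G_tendsto hd h (by positivity) he2).const_mul c).sub
        (hL.const_div_atTop 1)
      simpa using this
    · obtain ⟨_, _, h0⟩ := up (1 / 2) (by norm_num) (by norm_num)
      filter_upwards [h0, hL.eventually_gt_atTop 0, eventually_ge_atTop 1] with N h3 hN hN1
      have hNp : (0 : ℝ) < N := by exact_mod_cast hN1
      obtain ⟨h4, h5⟩ := he N hN1
      have h6 := energy_lower hd h h4 hM N
      rw [ENNReal.ofReal_le_iff_le_toReal h3.1, h5] at h6
      rw [le_div_iff₀ (by positivity)]
      rw [← hc] at h6
      clear_value c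
      refine le_trans (le_of_eq ?_) h6
      field_simp
  rw [tendsto_order]
  constructor
  · intro b hb
    have hlim : Tendsto (fun M : ℝ => (1 + 1 / M ^ 2) ^ (-((d : ℝ) / 2)) * κ) atTop (𝓝 κ) := by
      have h1 : Tendsto (fun M : ℝ => 1 + 1 / M ^ 2) atTop (𝓝 (1 + 0)) :=
        ((tendsto_pow_atTop (α := ℝ) (two_ne_zero)).const_div_atTop 1).const_add 1
      have h2 := (h1.rpow_const (p := -((d : ℝ) / 2)) (Or.inl (by norm_num))).mul_const κ
      simpa using h2
    obtain ⟨M, hM1, hM2⟩ := ((hlim.eventually_const_lt hb).and (eventually_gt_atTop 0)).exists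
    obtain ⟨G, hG1, hG2⟩ := low M hM2
    filter_upwards [hG1.eventually_const_lt hM1, hG2] with N h1 h2 using h1.trans_le h2
  · intro b hb
    have hlim : Tendsto (fun η : ℝ => κ / (1 - η)) (𝓝[>] 0) (𝓝 κ) := by
      have h1 : Tendsto (fun η : ℝ => κ / (1 - η)) (𝓝 0) (𝓝 (κ / (1 - 0))) := by
        apply Tendsto.div tendsto_const_nhds (by exact (continuous_const.sub continuous_id).tendsto 0)
        norm_num
      rw [sub_zero, div_one] at h1
      exact h1.mono_left nhdsWithin_le_nhds
    have h01 : ∀ᶠ η : ℝ in 𝓝[>] 0, η < 1 :=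
      nhdsWithin_le_nhds (gt_mem_nhds one_pos)
    obtain ⟨η, ⟨hM1, hM2⟩, hM3⟩ := (((hlim.eventually_lt_const hb).and h01).and
      self_mem_nhdsWithin).exists
    obtain ⟨G, hG1, hG2⟩ := up η hM3 hM2
    filter_upwards [hG1.eventually_lt_const hM1, hG2] with N h1 h2 using h2.2.trans_lt h1


/-- Build a `CapMeasure` from a finite rotation invariant measure on the sphere. -/
lemma capMeasure_of_invariant {d : ℕ} (μ : Measure (EuclideanSpace ℝ (Fin (d + 1))))
    (hfin : μ Set.univ ≠ ⊤) (hne : μ Set.univ ≠ 0)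
    (hsupp : ∀ᵐ x ∂μ, x ∈ sphere (0 : EuclideanSpace ℝ (Fin (d + 1))) 1)
    (hinv : ∀ g : EuclideanSpace ℝ (Fin (d + 1)) ≃ₗᵢ[ℝ] EuclideanSpace ℝ (Fin (d + 1)),
      μ.map g = μ)
    (e₀ : EuclideanSpace ℝ (Fin (d + 1)))
    (he₀ : e₀ ∈ sphere (0 : EuclideanSpace ℝ (Fin (d + 1))) 1) {κ : ℝ}
    (hlim : Tendsto (fun r : ℝ => μ.real (ball e₀ r) / r ^ d) (𝓝[>] 0) (𝓝 κ)) :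
    ∃ σ ν, CapMeasure d σ ν (κ / μ.real Set.univ) := by
  refine ⟨(μ Set.univ)⁻¹ • μ, ((μ Set.univ)⁻¹ • μ).map (fun y => dist e₀ y), ?_, ?_, ?_, ?_⟩
  · constructor
    rw [Measure.smul_apply, smul_eq_mul, ENNReal.inv_mul_cancel hne hfin]
  · exact Measure.ae_smul_measure hsupp _
  · intro x hx
    rw [mem_sphere_zero_iff_norm] at hx he₀
    have h1 : (Submodule.reflection (Submodule.span ℝ {x - e₀})ᗮ) x = e₀ :=
      Submodule.reflection_sub (by rw [hx, he₀])
    set g := Submodule.reflection (Submodule.span ℝ {x - e₀})ᗮ with hg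
    have hm : Measurable g := g.continuous.measurable
    have h2 : (fun y => dist x y) = (fun y => dist e₀ y) ∘ g := by
      ext y
      simp only [Function.comp_apply]
      rw [← h1, g.dist_map]
    rw [h2, ← Measure.map_map (by fun_prop) hm, Measure.map_smul, hinv g]
  · have h3 := hlim.div_const (μ.real Set.univ)
    refine h3.congr fun r => ?_
    rw [map_measureReal_apply (by fun_prop) measurableSet_Iio]
    have : (fun y => dist e₀ y) ⁻¹' Set.Iio r = ball e₀ r := by
      ext y
      simp [dist_comm]
    rw [this, measureReal_ennreal_smul_apply, ENNReal.toReal_inv]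
    simp only [measureReal_def]
    ring

/-- The north pole. -/
def npole (d : ℕ) : EuclideanSpace ℝ (Fin (d + 1)) := EuclideanSpace.single 0 1

/-- Projection to the last `d` coordinates. -/
def projT (d : ℕ) (y : EuclideanSpace ℝ (Fin (d + 1))) : EuclideanSpace ℝ (Fin d) :=
  WithLp.toLp 2 (fun i => y i.succ)

/-- Prepend a coordinate. -/
def consT (d : ℕ) (a : ℝ) (u : EuclideanSpace ℝ (Fin d)) : EuclideanSpace ℝ (Fin (d + 1)) :=
  WithLp.toLp 2 (Fin.cons a (fun i => u i))

/-- Parametrization of the upper half-sphere. -/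
def liftS (d : ℕ) (u : EuclideanSpace ℝ (Fin d)) : EuclideanSpace ℝ (Fin (d + 1)) :=
  consT d (√(1 - ‖u‖ ^ 2)) u

@[simp] lemma consT_zero (d : ℕ) (a : ℝ) (u : EuclideanSpace ℝ (Fin d)) : consT d a u 0 = a := by
  simp [consT]

@[simp] lemma projT_consT (d : ℕ) (a : ℝ) (u : EuclideanSpace ℝ (Fin d)) :
    projT d (consT d a u) = u := by
  ext i
  simp [projT, consT]

lemma consT_projT (d : ℕ) (y : EuclideanSpace ℝ (Fin (d + 1))) : consT d (y 0) (projT d y) = y := by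
  ext i
  refine Fin.cases ?_ (fun i => ?_) i <;> simp [projT, consT]

lemma projT_sub (d : ℕ) (x y : EuclideanSpace ℝ (Fin (d + 1))) :
    projT d (x - y) = projT d x - projT d y := by
  ext i
  simp [projT]

lemma projT_smul (d : ℕ) (c : ℝ) (y : EuclideanSpace ℝ (Fin (d + 1))) :
    projT d (c • y) = c • projT d y := by
  ext i
  simp [projT]

lemma norm_sq_split (d : ℕ) (y : EuclideanSpace ℝ (Fin (d + 1))) :
    ‖y‖ ^ 2 = (y 0) ^ 2 + ‖projT d y‖ ^ 2 := by
  rw [EuclideanSpace.norm_sq_eq, EuclideanSpace.norm_sq_eq, Fin.sum_univ_succ]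
  simp [projT]

lemma norm_npole (d : ℕ) : ‖npole d‖ = 1 := by
  simp [npole]

lemma dist_npole_lt {d : ℕ} {y : EuclideanSpace ℝ (Fin (d + 1))} (hy : ‖y‖ = 1) {r : ℝ}
    (hr : 0 < r) : y ∈ ball (npole d) r ↔ 1 - r ^ 2 / 2 < y 0 := by
  have h1 : dist y (npole d) ^ 2 = 2 - 2 * y 0 := by
    have : ⟪y, npole d⟫ = y 0 := by
      simp [npole, EuclideanSpace.inner_single_right]
    rw [dist_eq_norm, @norm_sub_sq_real, hy, norm_npole, this]
    ring
  rw [mem_ball, ← sq_lt_sq₀ dist_nonneg hr.le, h1]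
  constructor <;> intro h <;> linarith

lemma norm_liftS {d : ℕ} {u : EuclideanSpace ℝ (Fin d)} (hu : ‖u‖ ≤ 1) : ‖liftS d u‖ = 1 := by
  have h := norm_sq_split d (liftS d u)
  rw [liftS, consT_zero, projT_consT, Real.sq_sqrt (by nlinarith [norm_nonneg u])] at h
  have h2 : ‖liftS d u‖ ^ 2 = 1 := by rw [liftS, h]; ring
  exact (pow_eq_one_iff_of_nonneg (norm_nonneg _) two_ne_zero).1 h2

lemma projT_lipschitz (d : ℕ) : LipschitzWith 1 (projT d) := by
  refine LipschitzWith.of_dist_le_mul fun x y => ?_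
  rw [dist_eq_norm, dist_eq_norm, ← projT_sub, NNReal.coe_one, one_mul]
  have := norm_sq_split d (x - y)
  refine (sq_le_sq₀ (norm_nonneg _) (norm_nonneg _)).1 ?_
  nlinarith [sq_nonneg ((x - y) 0)]

lemma liftS_lipschitz (d : ℕ) {ρ c : ℝ} (hc : 0 < c) (hρc : c ^ 2 = 1 - ρ ^ 2) (hρ : 0 ≤ ρ) :
    LipschitzOnWith (Real.toNNReal c⁻¹) (liftS d) (ball 0 ρ) := by
  refine LipschitzOnWith.of_dist_le_mul fun u hu v hv => ?_
  rw [mem_ball_zero_iff] at hu hv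
  rw [Real.coe_toNNReal _ (by positivity), dist_eq_norm, dist_eq_norm]
  refine (sq_le_sq₀ (norm_nonneg _) (by positivity)).1 ?_
  rw [norm_sq_split, projT_sub, liftS, liftS, projT_consT, projT_consT, PiLp.sub_apply, consT_zero,
    consT_zero]
  set a := ‖u‖
  set b := ‖v‖
  have ha0 : 0 ≤ a := norm_nonneg u
  have hb0 : 0 ≤ b := norm_nonneg v
  have hab : |a - b| ≤ ‖u - v‖ := abs_norm_sub_norm_le u v
  have hab2 : (a - b) ^ 2 ≤ ‖u - v‖ ^ 2 := by
    rw [← sq_abs]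
    gcongr
  have h1 : c ≤ √(1 - a ^ 2) := Real.le_sqrt_of_sq_le (by nlinarith)
  have h2 : c ≤ √(1 - b ^ 2) := Real.le_sqrt_of_sq_le (by nlinarith)
  have h3 : √(1 - a ^ 2) ^ 2 = 1 - a ^ 2 := Real.sq_sqrt (by nlinarith)
  have h4 : √(1 - b ^ 2) ^ 2 = 1 - b ^ 2 := Real.sq_sqrt (by nlinarith)
  set p := √(1 - a ^ 2)
  set q := √(1 - b ^ 2)
  set D := ‖u - v‖ ^ 2
  have h5 : (p - q) ^ 2 * (p + q) ^ 2 = (a - b) ^ 2 * (a + b) ^ 2 := by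
    have : (p - q) * (p + q) = (b - a) * (a + b) := by nlinarith
    calc (p - q) ^ 2 * (p + q) ^ 2 = ((p - q) * (p + q)) ^ 2 := by ring
      _ = _ := by rw [this]; ring
  have h6 : (2 * c) ^ 2 ≤ (p + q) ^ 2 := by gcongr; linarith
  have h7 : (a + b) ^ 2 ≤ (2 * ρ) ^ 2 := by gcongr; linarith
  have h8 : (p - q) ^ 2 * c ^ 2 ≤ D * ρ ^ 2 := by
    have i1 : (p - q) ^ 2 * (2 * c) ^ 2 ≤ (p - q) ^ 2 * (p + q) ^ 2 := by gcongr
    have i2 : (a - b) ^ 2 * (a + b) ^ 2 ≤ D * (2 * ρ) ^ 2 := by gcongr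
    nlinarith
  have h9 : ((p - q) ^ 2 + D) * c ^ 2 ≤ D := by nlinarith
  rw [mul_pow, inv_pow, ← div_eq_inv_mul, le_div_iff₀ (by positivity)]
  exact h9

/-- The radius of the projection of a cap of radius `r`. -/
def rad (r : ℝ) : ℝ := r * √(1 - r ^ 2 / 4)

lemma rad_sq {r : ℝ} (hr : r < 1) (hr0 : 0 < r) : (1 - r ^ 2 / 2) ^ 2 = 1 - rad r ^ 2 := by
  rw [rad, mul_pow, Real.sq_sqrt (by nlinarith)]
  ring

lemma ball_subset_proj {d : ℕ} {r : ℝ} (hr0 : 0 < r) (hr : r < 1) :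
    ball (0 : EuclideanSpace ℝ (Fin d)) (rad r) ⊆
      projT d '' (sphere 0 1 ∩ ball (npole d) r) := by
  intro u hu
  rw [mem_ball_zero_iff] at hu
  have h1 := rad_sq hr hr0
  have h2 : ‖u‖ ^ 2 < rad r ^ 2 := by gcongr
  have h3 : ‖u‖ ≤ 1 := by
    refine (sq_le_sq₀ (norm_nonneg _) zero_le_one).1 ?_
    nlinarith
  refine ⟨liftS d u, ⟨?_, ?_⟩, by simp [liftS]⟩
  · rw [mem_sphere_zero_iff_norm, norm_liftS h3]
  · rw [dist_npole_lt (norm_liftS h3) hr0, liftS, consT_zero]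
    apply Real.lt_sqrt_of_sq_lt
    linarith

lemma cap_subset_lift {d : ℕ} {r : ℝ} (hr0 : 0 < r) (hr : r < 1) :
    sphere 0 1 ∩ ball (npole d) r ⊆ liftS d '' (ball 0 (rad r)) := by
  rintro y ⟨hy, hyr⟩
  rw [mem_sphere_zero_iff_norm] at hy
  rw [dist_npole_lt hy hr0] at hyr
  have h0 := norm_sq_split d y
  have h1 := rad_sq hr hr0
  have hc : 0 < 1 - r ^ 2 / 2 := by nlinarith
  have hrad : 0 ≤ rad r := by unfold rad; positivity
  rw [hy] at h0
  refine ⟨projT d y, ?_, ?_⟩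
  · rw [mem_ball_zero_iff]
    refine (sq_lt_sq₀ (norm_nonneg _) hrad).1 ?_
    nlinarith
  · rw [liftS]
    have : 1 - ‖projT d y‖ ^ 2 = (y 0) ^ 2 := by linarith
    rw [this, Real.sqrt_sq (by linarith), consT_projT]


lemma haus_haar (d : ℕ) :
    (μH[(d : ℝ)] : Measure (EuclideanSpace ℝ (Fin d))).IsAddHaarMeasure := by
  simpa using MeasureTheory.isAddHaarMeasure_hausdorffMeasure (E := EuclideanSpace ℝ (Fin d))

lemma tendsto_lower_aux (d : ℕ) (β : ℝ) :
    Tendsto (fun r : ℝ => √(1 - r ^ 2 / 4) ^ d * β) (𝓝[>] 0) (𝓝 β) := by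
  have h : Continuous (fun r : ℝ => √(1 - r ^ 2 / 4) ^ d * β) := by fun_prop
  have := h.tendsto 0
  simp only [ne_eq, OfNat.ofNat_ne_zero, not_false_eq_true, zero_pow, zero_div, sub_zero,
    Real.sqrt_one, one_pow, one_mul] at this
  exact this.mono_left nhdsWithin_le_nhds

lemma tendsto_c_aux (k : ℕ) :
    Tendsto (fun r : ℝ => (1 - r ^ 2 / 2) ^ k) (𝓝[>] 0) (𝓝 1) := by
  have h : Continuous (fun r : ℝ => (1 - r ^ 2 / 2) ^ k) := by fun_prop
  have := h.tendsto 0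
  simp only [ne_eq, OfNat.ofNat_ne_zero, not_false_eq_true, zero_pow, zero_div, sub_zero,
    one_pow] at this
  exact this.mono_left nhdsWithin_le_nhds

lemma haus_cap_bounds {d : ℕ} {r : ℝ} (hr0 : 0 < r) (hr : r < 1) :
    ENNReal.ofReal (rad r ^ d) * μH[(d : ℝ)] (ball (0 : EuclideanSpace ℝ (Fin d)) 1) ≤
      μH[(d : ℝ)] (sphere 0 1 ∩ ball (npole d) r) ∧
    μH[(d : ℝ)] (sphere 0 1 ∩ ball (npole d) r) ≤
      ENNReal.ofReal (((1 - r ^ 2 / 2) ^ d)⁻¹ * rad r ^ d) *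
        μH[(d : ℝ)] (ball (0 : EuclideanSpace ℝ (Fin d)) 1) := by
  have := haus_haar d
  have hc : 0 < 1 - r ^ 2 / 2 := by nlinarith
  have hrad : 0 ≤ rad r := by unfold rad; positivity
  have hb : μH[(d : ℝ)] (ball (0 : EuclideanSpace ℝ (Fin d)) (rad r)) =
      ENNReal.ofReal (rad r ^ d) * μH[(d : ℝ)] (ball (0 : EuclideanSpace ℝ (Fin d)) 1) := by
    have hrad' : 0 < rad r := by
      unfold rad
      have : 0 < 1 - r ^ 2 / 4 := by nlinarith
      positivity
    rw [Measure.addHaar_ball_of_pos _ _ hrad', finrank_euclideanSpace_fin]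
  constructor
  · rw [← hb]
    refine (measure_mono (ball_subset_proj hr0 hr)).trans ?_
    refine ((projT_lipschitz d).hausdorffMeasure_image_le (by positivity) _).trans ?_
    simp
  · refine (measure_mono (cap_subset_lift hr0 hr)).trans ?_
    refine ((liftS_lipschitz d hc (rad_sq hr hr0) hrad).hausdorffMeasure_image_le
      (by positivity)).trans ?_
    rw [hb, ENNReal.ofReal_mul (by positivity), mul_assoc]
    refine le_of_eq ?_
    congr 1
    rw [ENNReal.rpow_natCast, ← inv_pow, ENNReal.ofReal_pow (by positivity)]
    rfl

/-- Hausdorff measure restricted to the sphere. -/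
def hausS (d : ℕ) : Measure (EuclideanSpace ℝ (Fin (d + 1))) :=
  μH[(d : ℝ)].restrict (sphere (0 : EuclideanSpace ℝ (Fin (d + 1))) 1)

lemma hausS_inv (d : ℕ)
    (g : EuclideanSpace ℝ (Fin (d + 1)) ≃ₗᵢ[ℝ] EuclideanSpace ℝ (Fin (d + 1))) :
    (hausS d).map g = hausS d := by
  have h1 : MeasurePreserving g (μH[(d : ℝ)]) (μH[(d : ℝ)]) :=
    g.toIsometryEquiv.measurePreserving_hausdorffMeasure _
  have h2 := h1.restrict_preimage
    (isClosed_sphere (x := (0 : EuclideanSpace ℝ (Fin (d + 1)))) (ε := 1)).measurableSet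
  have h3 : g ⁻¹' (sphere (0 : EuclideanSpace ℝ (Fin (d + 1))) 1) = sphere 0 1 := by
    ext y
    simp
  rw [h3] at h2
  exact h2.map_eq

lemma hausS_ball (d : ℕ) (r : ℝ) (x : EuclideanSpace ℝ (Fin (d + 1))) :
    hausS d (ball x r) = μH[(d : ℝ)] (sphere 0 1 ∩ ball x r) := by
  rw [hausS, Measure.restrict_apply measurableSet_ball, Set.inter_comm]

lemma haus_ball_pos (d : ℕ) : 0 < μH[(d : ℝ)] (ball (0 : EuclideanSpace ℝ (Fin d)) 1) := by
  have := haus_haar d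
  exact measure_ball_pos _ _ one_pos

lemma haus_ball_fin (d : ℕ) : μH[(d : ℝ)] (ball (0 : EuclideanSpace ℝ (Fin d)) 1) ≠ ⊤ := by
  have := haus_haar d
  exact measure_ball_lt_top.ne

lemma hausS_univ (d : ℕ) :
    hausS d Set.univ = μH[(d : ℝ)] (sphere (0 : EuclideanSpace ℝ (Fin (d + 1))) 1) := by
  simp [hausS]

lemma hausS_ne_zero (d : ℕ) : hausS d Set.univ ≠ 0 := by
  have h := (haus_cap_bounds (d := d) (r := 1 / 2) (by norm_num) (by norm_num)).1
  rw [← hausS_ball] at h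
  have h2 := h.trans (measure_mono (Set.subset_univ _))
  intro h0
  rw [h0] at h2
  have h3 : 0 < rad (1 / 2) := by
    unfold rad
    have : (0 : ℝ) < 1 - (1 / 2) ^ 2 / 4 := by norm_num
    positivity
  have h4 := ENNReal.mul_pos (ENNReal.ofReal_pos.2 (pow_pos h3 d)).ne' (haus_ball_pos d).ne'
  exact absurd h2 (not_le.2 h4)

lemma hausS_ne_top (d : ℕ) : hausS d Set.univ ≠ ⊤ := by
  rw [hausS_univ]
  refine (IsCompact.measure_lt_top_of_nhdsWithin
    (isCompact_sphere (0 : EuclideanSpace ℝ (Fin (d + 1))) 1) fun x hx => ?_).ne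
  refine ⟨sphere 0 1 ∩ ball x (1 / 2), inter_mem_nhdsWithin _ (ball_mem_nhds _ (by norm_num)), ?_⟩
  rw [← hausS_ball]
  rw [mem_sphere_zero_iff_norm] at hx
  have h1 : (Submodule.reflection (Submodule.span ℝ {npole d - x})ᗮ) (npole d) = x :=
    Submodule.reflection_sub (by rw [hx, norm_npole])
  set g := Submodule.reflection (Submodule.span ℝ {npole d - x})ᗮ with hg
  have hm : Measurable g := g.continuous.measurable
  have h2 : hausS d (ball x (1 / 2)) = hausS d (ball (npole d) (1 / 2)) := by
    conv_lhs => rw [← hausS_inv d g]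
    rw [Measure.map_apply hm measurableSet_ball]
    congr 1
    ext y
    rw [Set.mem_preimage, mem_ball, mem_ball, ← h1, g.dist_map]
  rw [h2, hausS_ball]
  refine lt_of_le_of_lt (haus_cap_bounds (d := d) (r := 1 / 2) (by norm_num) (by norm_num)).2 ?_
  exact ENNReal.mul_lt_top ENNReal.ofReal_lt_top (haus_ball_fin d).lt_top

lemma hausS_lim (d : ℕ) : Tendsto (fun r : ℝ => (hausS d).real (ball (npole d) r) / r ^ d) (𝓝[>] 0)
    (𝓝 (μH[(d : ℝ)] (ball (0 : EuclideanSpace ℝ (Fin d)) 1)).toReal) := by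
  set β := (μH[(d : ℝ)] (ball (0 : EuclideanSpace ℝ (Fin d)) 1)).toReal with hβ
  have hl := tendsto_lower_aux d β
  have hu := ((tendsto_c_aux d).inv₀ one_ne_zero).mul hl
  rw [inv_one, one_mul] at hu
  have h1 : ∀ᶠ r : ℝ in 𝓝[>] 0, r < 1 := nhdsWithin_le_nhds (gt_mem_nhds one_pos)
  refine tendsto_of_tendsto_of_tendsto_of_le_of_le' hl hu ?_ ?_
  · filter_upwards [h1, self_mem_nhdsWithin] with r hr (hr0 : 0 < r)
    have h := (haus_cap_bounds (d := d) hr0 hr)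
    have hrad : 0 ≤ rad r := by unfold rad; positivity
    have hfin : μH[(d : ℝ)] (sphere 0 1 ∩ ball (npole d) r) ≠ ⊤ := by
      rw [← hausS_ball]
      exact ne_top_of_le_ne_top (hausS_ne_top d) (measure_mono (Set.subset_univ _))
    have h2 := ENNReal.toReal_mono hfin h.1
    rw [ENNReal.toReal_mul, ENNReal.toReal_ofReal (by positivity), ← hβ] at h2
    rw [le_div_iff₀ (by positivity), measureReal_def, hausS_ball]
    refine le_trans (le_of_eq ?_) h2
    rw [rad]
    ring
  · filter_upwards [h1, self_mem_nhdsWithin] with r hr (hr0 : 0 < r)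
    have h := (haus_cap_bounds (d := d) hr0 hr)
    have hrad : 0 ≤ rad r := by unfold rad; positivity
    have hc : 0 < 1 - r ^ 2 / 2 := by nlinarith
    have h2 := ENNReal.toReal_mono (ENNReal.mul_ne_top ENNReal.ofReal_ne_top (haus_ball_fin d)) h.2
    rw [ENNReal.toReal_mul, ENNReal.toReal_ofReal (by positivity), ← hβ] at h2
    rw [div_le_iff₀ (by positivity), measureReal_def, hausS_ball]
    refine le_trans h2 (le_of_eq ?_)
    rw [rad]
    ring

lemma haus_cap (d : ℕ) : ∃ σ ν, CapMeasure d σ ν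
    ((μH[(d : ℝ)] (closedBall (0 : EuclideanSpace ℝ (Fin d)) 1)).toReal /
          (μH[(d : ℝ)] (sphere (0 : EuclideanSpace ℝ (Fin (d + 1))) 1)).toReal) := by
  have := haus_haar d
  have h := capMeasure_of_invariant (hausS d) (hausS_ne_top d) (hausS_ne_zero d)
    (ae_restrict_mem isClosed_sphere.measurableSet) (hausS_inv d) (npole d)
    (mem_sphere_zero_iff_norm.2 (norm_npole d)) (hausS_lim d)
  rw [measureReal_def, hausS_univ] at h
  rwa [Measure.addHaar_unitClosedBall_eq_addHaar_unitBall]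


lemma split_preserving (d : ℕ) :
    MeasurePreserving (fun z : EuclideanSpace ℝ (Fin (d + 1)) => (z 0, projT d z))
      volume (volume.prod volume) := by
  have h1 := PiLp.volume_preserving_ofLp (Fin (d + 1))
  have h2 := volume_preserving_piFinSuccAbove (fun _ : Fin (d + 1) => ℝ) 0
  have h3 := (MeasurePreserving.id (volume : Measure ℝ)).prod (PiLp.volume_preserving_toLp (Fin d))
  have h4 := h3.comp (h2.comp h1)
  have e : (fun z : EuclideanSpace ℝ (Fin (d + 1)) => (z 0, projT d z)) =
      (Prod.map id (WithLp.toLp 2) ∘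
        (MeasurableEquiv.piFinSuccAbove (fun _ : Fin (d + 1) => ℝ) 0) ∘ WithLp.ofLp) := by
    ext z
    · simp [Fin.consEquiv]
    · simp [projT, Fin.tail]
  rw [e]
  exact h4

lemma continuous_projT (d : ℕ) : Continuous (projT d) := (projT_lipschitz d).continuous

lemma volume_cone (d : ℕ) {τ H : ℝ} (hτ : 0 < τ) (hH : 0 < H) :
    volume {z : EuclideanSpace ℝ (Fin (d + 1)) | (0 < z 0 ∧ z 0 < H) ∧ ‖projT d z‖ < τ * z 0} =
      ENNReal.ofReal (τ ^ d * (H ^ (d + 1) / (d + 1))) *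
        volume (ball (0 : EuclideanSpace ℝ (Fin d)) 1) := by
  set B : Set (ℝ × EuclideanSpace ℝ (Fin d)) := {p | (0 < p.1 ∧ p.1 < H) ∧ ‖p.2‖ < τ * p.1} with hB
  have hBm : MeasurableSet B :=
    (((isOpen_lt continuous_const continuous_fst).inter
      (isOpen_lt continuous_fst continuous_const)).inter
      (isOpen_lt continuous_snd.norm (continuous_const.mul continuous_fst))).measurableSet
  have h1 : {z : EuclideanSpace ℝ (Fin (d + 1)) | (0 < z 0 ∧ z 0 < H) ∧ ‖projT d z‖ < τ * z 0} =
      (fun z : EuclideanSpace ℝ (Fin (d + 1)) => (z 0, projT d z)) ⁻¹' B := rfl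
  rw [h1, (split_preserving d).measure_preimage hBm.nullMeasurableSet, Measure.prod_apply hBm]
  set V := volume (ball (0 : EuclideanSpace ℝ (Fin d)) 1) with hV
  have h2 : ∀ h : ℝ, volume (Prod.mk h ⁻¹' B) =
      (Set.Ioo 0 H).indicator (fun h => ENNReal.ofReal ((τ * h) ^ d) * V) h := by
    intro h
    by_cases hh : h ∈ Set.Ioo 0 H
    · rw [Set.indicator_of_mem hh]
      have : Prod.mk h ⁻¹' B = ball 0 (τ * h) := by
        ext u
        simp [hB, hh.1, hh.2]
      rw [this, Measure.addHaar_ball_of_pos _ _ (mul_pos hτ hh.1), finrank_euclideanSpace_fin]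
    · rw [Set.indicator_of_notMem hh]
      have : Prod.mk h ⁻¹' B = ∅ := by
        ext u
        simp only [hB, Set.mem_preimage, Set.mem_ofPred_eq, Set.mem_empty_iff_false, iff_false]
        intro hu
        exact hh hu.1
      rw [this, measure_empty]
  simp_rw [h2]
  rw [lintegral_indicator measurableSet_Ioo, lintegral_mul_const _ (by fun_prop)]
  congr 1
  rw [← ofReal_integral_eq_lintegral_ofReal]
  · congr 1
    rw [← integral_Ioc_eq_integral_Ioo, ← intervalIntegral.integral_of_le hH.le]
    simp_rw [mul_pow]
    rw [intervalIntegral.integral_const_mul, integral_pow]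
    simp
  · have : IntegrableOn (fun h : ℝ => (τ * h) ^ d) (Set.Icc 0 H) :=
      ContinuousOn.integrableOn_Icc (by fun_prop)
    exact this.mono_set Set.Ioo_subset_Icc_self
  · filter_upwards [ae_restrict_mem measurableSet_Ioo] with h hh
    have := hh.1
    positivity

/-- The normalization map. -/
def nrm (d : ℕ) (z : EuclideanSpace ℝ (Fin (d + 1))) : EuclideanSpace ℝ (Fin (d + 1)) := ‖z‖⁻¹ • z

lemma measurable_nrm (d : ℕ) : Measurable (nrm d) := by
  unfold nrm
  fun_prop

/-- The cone measure on the sphere. -/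
def coneS (d : ℕ) : Measure (EuclideanSpace ℝ (Fin (d + 1))) :=
  (volume.restrict (ball 0 1)).map (nrm d)

lemma coneS_univ (d : ℕ) :
    coneS d Set.univ = volume (ball (0 : EuclideanSpace ℝ (Fin (d + 1))) 1) := by
  rw [coneS, Measure.map_apply (measurable_nrm d) MeasurableSet.univ]
  simp

lemma norm_nrm {d : ℕ} {z : EuclideanSpace ℝ (Fin (d + 1))} (hz : z ≠ 0) : ‖nrm d z‖ = 1 := by
  rw [nrm, norm_smul, norm_inv, norm_norm, inv_mul_cancel₀ (norm_ne_zero_iff.2 hz)]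

lemma coneS_supp (d : ℕ) :
    ∀ᵐ x ∂(coneS d), x ∈ sphere (0 : EuclideanSpace ℝ (Fin (d + 1))) 1 := by
  rw [coneS]
  refine (ae_map_iff (p := fun x => x ∈ sphere (0 : EuclideanSpace ℝ (Fin (d + 1))) 1)
    (measurable_nrm d).aemeasurable isClosed_sphere.measurableSet).2 ?_
  apply ae_restrict_of_ae
  have : ∀ᵐ z : EuclideanSpace ℝ (Fin (d + 1)) ∂volume, z ≠ 0 := by
    simp [ae_iff]
  filter_upwards [this] with z hz
  rw [mem_sphere_zero_iff_norm, norm_nrm hz]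

lemma coneS_inv (d : ℕ)
    (g : EuclideanSpace ℝ (Fin (d + 1)) ≃ₗᵢ[ℝ] EuclideanSpace ℝ (Fin (d + 1))) :
    (coneS d).map g = coneS d := by
  have hm : Measurable g := g.continuous.measurable
  have h2 := g.measurePreserving.restrict_preimage
    (measurableSet_ball (x := (0 : EuclideanSpace ℝ (Fin (d + 1)))) (ε := 1))
  have h3 : g ⁻¹' (ball (0 : EuclideanSpace ℝ (Fin (d + 1))) 1) = ball 0 1 := by
    ext y
    simp
  rw [h3] at h2
  have hc : g ∘ nrm d = nrm d ∘ g := by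
    ext1 z
    simp [nrm]
  rw [coneS, Measure.map_map hm (measurable_nrm d), hc, ← Measure.map_map (measurable_nrm d) hm,
    h2.map_eq]

lemma coneS_ball (d : ℕ) (r : ℝ) :
    coneS d (ball (npole d) r) = volume (nrm d ⁻¹' (ball (npole d) r) ∩ ball 0 1) := by
  rw [coneS, Measure.map_apply (measurable_nrm d) measurableSet_ball,
    Measure.restrict_apply (measurable_nrm d measurableSet_ball)]

lemma nrm_mem_ball {d : ℕ} {r : ℝ} (hr0 : 0 < r) (hr : r < 1)
    {z : EuclideanSpace ℝ (Fin (d + 1))} (hz : z ≠ 0) :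
    nrm d z ∈ ball (npole d) r ↔ 0 < z 0 ∧ ‖projT d z‖ < rad r / (1 - r ^ 2 / 2) * z 0 := by
  have hc : 0 < 1 - r ^ 2 / 2 := by nlinarith
  have hrad : 0 ≤ rad r := by unfold rad; positivity
  have h1 := rad_sq hr hr0
  have hs := norm_sq_split d z
  have hzp : 0 < ‖z‖ := norm_pos_iff.2 hz
  rw [dist_npole_lt (norm_nrm hz) hr0]
  have e : nrm d z 0 = z 0 / ‖z‖ := by simp [nrm, div_eq_inv_mul]
  rw [e, lt_div_iff₀ hzp]
  set c := 1 - r ^ 2 / 2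
  rw [div_mul_eq_mul_div, lt_div_iff₀ hc]
  constructor
  · intro h
    have hz0 : 0 < z 0 := lt_trans (by positivity) h
    refine ⟨hz0, ?_⟩
    have h2 : (c * ‖z‖) ^ 2 < z 0 ^ 2 := by gcongr
    refine (sq_lt_sq₀ (by positivity) (by positivity)).1 ?_
    nlinarith
  · rintro ⟨hz0, h⟩
    have h2 : (‖projT d z‖ * c) ^ 2 < (rad r * z 0) ^ 2 := by gcongr
    refine (sq_lt_sq₀ (by positivity) (by positivity)).1 ?_
    nlinarith

lemma coneS_bounds {d : ℕ} {r : ℝ} (hr0 : 0 < r) (hr : r < 1) :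
    ENNReal.ofReal ((rad r / (1 - r ^ 2 / 2)) ^ d * ((1 - r ^ 2 / 2) ^ (d + 1) / (d + 1))) *
      volume (ball (0 : EuclideanSpace ℝ (Fin d)) 1) ≤ coneS d (ball (npole d) r) ∧
    coneS d (ball (npole d) r) ≤
      ENNReal.ofReal ((rad r / (1 - r ^ 2 / 2)) ^ d * (1 ^ (d + 1) / (d + 1))) *
      volume (ball (0 : EuclideanSpace ℝ (Fin d)) 1) := by
  have hc : 0 < 1 - r ^ 2 / 2 := by nlinarith
  have h1 := rad_sq hr hr0
  have hrad : 0 < rad r := by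
    unfold rad
    have : 0 < 1 - r ^ 2 / 4 := by nlinarith
    positivity
  have hτ : 0 < rad r / (1 - r ^ 2 / 2) := by positivity
  rw [← volume_cone d hτ hc, ← volume_cone d hτ one_pos, coneS_ball]
  constructor
  · apply measure_mono
    rintro z ⟨⟨hz0, hzc⟩, hz⟩
    have hzne : z ≠ 0 := by
      rintro rfl
      simp at hz0
    refine ⟨(nrm_mem_ball hr0 hr hzne).2 ⟨hz0, hz⟩, ?_⟩
    rw [mem_ball_zero_iff]
    have hs := norm_sq_split d z
    refine (sq_lt_sq₀ (norm_nonneg _) zero_le_one).1 ?_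
    rw [div_mul_eq_mul_div, lt_div_iff₀ hc] at hz
    have h2 : (‖projT d z‖ * (1 - r ^ 2 / 2)) ^ 2 < (rad r * z 0) ^ 2 := by gcongr
    set c := 1 - r ^ 2 / 2
    have h3 : ‖z‖ ^ 2 * c ^ 2 < z 0 ^ 2 := by nlinarith
    have h4 : z 0 ^ 2 < c ^ 2 := by gcongr
    have h5 : ‖z‖ ^ 2 * c ^ 2 < 1 * c ^ 2 := by linarith
    rw [one_pow]
    exact lt_of_mul_lt_mul_right h5 (by positivity)
  · rw [← measure_sdiff_null (s := nrm d ⁻¹' (ball (npole d) r) ∩ ball 0 1)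
      (measure_singleton (0 : EuclideanSpace ℝ (Fin (d + 1))))]
    apply measure_mono
    rintro z ⟨⟨hzb, hz1⟩, hz0⟩
    have hzne : z ≠ 0 := hz0
    obtain ⟨h2, h3⟩ := (nrm_mem_ball hr0 hr hzne).1 hzb
    refine ⟨⟨h2, ?_⟩, h3⟩
    rw [mem_ball_zero_iff] at hz1
    have hs := norm_sq_split d z
    refine (sq_lt_sq₀ h2.le zero_le_one).1 ?_
    nlinarith [norm_nonneg z, sq_nonneg ‖projT d z‖]

lemma coneS_lim (d : ℕ) : Tendsto (fun r : ℝ => (coneS d).real (ball (npole d) r) / r ^ d) (𝓝[>] 0)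
    (𝓝 ((volume (ball (0 : EuclideanSpace ℝ (Fin d)) 1)).toReal / (d + 1))) := by
  set β := (volume (ball (0 : EuclideanSpace ℝ (Fin d)) 1)).toReal with hβ
  have hfinV : volume (ball (0 : EuclideanSpace ℝ (Fin d)) 1) ≠ ⊤ := measure_ball_lt_top.ne
  have hu := ((tendsto_c_aux d).inv₀ one_ne_zero).mul (tendsto_lower_aux d (β / (d + 1)))
  have hl := (tendsto_c_aux (d + 1)).mul hu
  rw [inv_one, one_mul] at hu
  rw [inv_one, one_mul, one_mul] at hl
  have h1 : ∀ᶠ r : ℝ in 𝓝[>] 0, r < 1 := nhdsWithin_le_nhds (gt_mem_nhds one_pos)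
  refine tendsto_of_tendsto_of_tendsto_of_le_of_le' hl hu ?_ ?_
  · filter_upwards [h1, self_mem_nhdsWithin] with r hr (hr0 : 0 < r)
    have h := (coneS_bounds (d := d) hr0 hr)
    have hrad : 0 ≤ rad r := by unfold rad; positivity
    have hc : 0 < 1 - r ^ 2 / 2 := by nlinarith
    have hfin : coneS d (ball (npole d) r) ≠ ⊤ :=
      ne_top_of_le_ne_top (ENNReal.mul_ne_top ENNReal.ofReal_ne_top hfinV) h.2
    have h2 := ENNReal.toReal_mono hfin h.1
    rw [ENNReal.toReal_mul, ENNReal.toReal_ofReal (by positivity), ← hβ] at h2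
    rw [le_div_iff₀ (by positivity), measureReal_def]
    refine le_trans (le_of_eq ?_) h2
    rw [rad]
    ring
  · filter_upwards [h1, self_mem_nhdsWithin] with r hr (hr0 : 0 < r)
    have h := (coneS_bounds (d := d) hr0 hr)
    have hrad : 0 ≤ rad r := by unfold rad; positivity
    have hc : 0 < 1 - r ^ 2 / 2 := by nlinarith
    have h2 := ENNReal.toReal_mono (ENNReal.mul_ne_top ENNReal.ofReal_ne_top hfinV) h.2
    rw [ENNReal.toReal_mul, ENNReal.toReal_ofReal (by positivity), ← hβ] at h2
    rw [div_le_iff₀ (by positivity), measureReal_def]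
    refine le_trans h2 (le_of_eq ?_)
    rw [rad]
    ring

lemma cone_const {d : ℕ} (hd : 2 ≤ d) :
    (volume (ball (0 : EuclideanSpace ℝ (Fin d)) 1)).toReal / (d + 1) /
      (volume (ball (0 : EuclideanSpace ℝ (Fin (d + 1))) 1)).toReal
      = (1 / d) * Real.Gamma (((d : ℝ) + 1) / 2) / (Real.sqrt π * Real.Gamma ((d : ℝ) / 2)) := by
  have : Nonempty (Fin d) := ⟨⟨0, by omega⟩⟩
  have hd0 : (0 : ℝ) < d := by exact_mod_cast (by omega : 0 < d)
  rw [EuclideanSpace.volume_ball, EuclideanSpace.volume_ball]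
  simp only [ENNReal.ofReal_one, one_pow, one_mul, Fintype.card_fin]
  have g1 : 0 < Real.Gamma ((d : ℝ) / 2) := Real.Gamma_pos_of_pos (by positivity)
  have g2 : 0 < Real.Gamma (((d : ℝ) + 1) / 2) := Real.Gamma_pos_of_pos (by positivity)
  push_cast
  rw [Real.Gamma_add_one (by positivity), Real.Gamma_add_one (by positivity)]
  rw [ENNReal.toReal_ofReal (by positivity), ENNReal.toReal_ofReal (by positivity)]
  have hpi : 0 < √π := Real.sqrt_pos.2 Real.pi_pos
  rw [pow_succ]
  field_simp

lemma cone_cap (d : ℕ) : ∃ σ ν, CapMeasure d σ ν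
    ((volume (ball (0 : EuclideanSpace ℝ (Fin d)) 1)).toReal / (d + 1) /
      (volume (ball (0 : EuclideanSpace ℝ (Fin (d + 1))) 1)).toReal) := by
  have h := capMeasure_of_invariant (coneS d)
    (by rw [coneS_univ]; exact measure_ball_lt_top.ne)
    (by rw [coneS_univ]; exact (measure_ball_pos _ _ one_pos).ne')
    (coneS_supp d) (coneS_inv d) (npole d)
    (mem_sphere_zero_iff_norm.2 (norm_npole d)) (coneS_lim d)
  rwa [measureReal_def, coneS_univ] at h



/-- Boundary case `s = d`: for `d ≥ 2`, `E_d(S^d; N)/(N² log N)` converges to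
`H_d(B^d)/H_d(S^d) = (1/d) Γ((d+1)/2)/(√π Γ(d/2))` as `N → ∞`. -/
theorem minRieszEnergy_boundary_case (d : ℕ) (hd : 2 ≤ d) :
    Tendsto (fun N : ℕ =>
        (minRieszEnergy d d N).toReal / ((N : ℝ) ^ 2 * Real.log N)) atTop
      (𝓝 ((μH[(d : ℝ)] (closedBall (0 : EuclideanSpace ℝ (Fin d)) 1)).toReal /
          (μH[(d : ℝ)] (sphere (0 : EuclideanSpace ℝ (Fin (d + 1))) 1)).toReal))
    ∧ (μH[(d : ℝ)] (closedBall (0 : EuclideanSpace ℝ (Fin d)) 1)).toReal /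
        (μH[(d : ℝ)] (sphere (0 : EuclideanSpace ℝ (Fin (d + 1))) 1)).toReal
      = (1 / d) * Real.Gamma (((d : ℝ) + 1) / 2) / (Real.sqrt π * Real.Gamma ((d : ℝ) / 2)) := by
  have hd0 : d ≠ 0 := by omega
  obtain ⟨σ, ν, h1⟩ := haus_cap d
  obtain ⟨σ', ν', h2⟩ := cone_cap d
  have t1 := energy_tendsto hd0 h1
  have t2 := energy_tendsto hd0 h2
  refine ⟨t1, ?_⟩
  rw [tendsto_nhds_unique t1 t2]
  exact cone_const hd
end
end

section
/- Kuijlaars–Saff upper bound: for every real s > 2, the minimal Riesz s-energy on the 2-sphere E_s(S²; N) := inf { ∑_{j≠k} |x_j − x_k|^{−s} : x_1,…,x_N ∈ S² } satisfies limsup_{N→∞} E_s(S²; N) / N^{1+s/2} ≤ ( √3 / (8π) )^{s/2} · ζ_Λ(s), where ζ_Λ(s) := ∑_{(m,n) ∈ Z² \ {(0,0)}} (m² + mn + n²)^{−s/2} is the (convergent for s > 2) zeta function of the hexagonal lattice. -/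
open MeasureTheory Metric Real Filter
open scoped BigOperators ENNReal NNReal RealInnerProductSpace Topology

noncomputable section

abbrev E3 := EuclideanSpace ℝ (Fin (2 + 1))

def hexG (s : ℝ) (p : ℤ × ℤ) : ℝ :=
  ((p.1 ^ 2 + p.1 * p.2 + p.2 ^ 2 : ℤ) : ℝ) ^ (-(s / 2))

lemma hexG_zero (s : ℝ) (hs : 2 < s) : hexG s 0 = 0 := by
  unfold hexG
  simp only [Prod.fst_zero, Prod.snd_zero]
  norm_num
  rw [Real.zero_rpow]
  linarith

lemma hexQ_nonneg (a b : ℤ) : (0:ℝ) ≤ ((a ^ 2 + a * b + b ^ 2 : ℤ) : ℝ) := by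
  push_cast
  nlinarith [sq_nonneg ((a:ℝ) + b / 2), sq_nonneg (b:ℝ)]

lemma hexG_nonneg (s : ℝ) (p : ℤ × ℤ) : 0 ≤ hexG s p :=
  Real.rpow_nonneg (hexQ_nonneg _ _) _

lemma hexG_summable (s : ℝ) (hs : 2 < s) : Summable (hexG s) := by
  have h0 := EisensteinSeries.summable_one_div_norm_rpow hs
  have h1 := ((finTwoArrowEquiv ℤ).symm.summable_iff.mpr h0).mul_left
    (((3:ℝ) / 4) ^ (-(s / 2)))
  refine Summable.of_nonneg_of_le (hexG_nonneg s) ?_ h1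
  rintro ⟨a, b⟩
  by_cases hz : (a, b) = (0 : ℤ × ℤ)
  · rw [hz, hexG_zero s hs]
    exact mul_nonneg (by positivity) (Real.rpow_nonneg (norm_nonneg _) _)
  simp only [Function.comp]
  set v : Fin 2 → ℤ := (finTwoArrowEquiv ℤ).symm (a, b) with hv
  have hv0 : v 0 = a := rfl
  have hv1 : v 1 = b := rfl
  have hvpos : 0 < ‖v‖ := by
    rw [norm_pos_iff]
    intro h
    apply hz
    have e0 : a = 0 := by rw [← hv0, h]; rfl
    have e1 : b = 0 := by rw [← hv1, h]; rfl
    rw [e0, e1]; rfl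
  have hle : (3 / 4 : ℝ) * ‖v‖ ^ 2 ≤ ((a ^ 2 + a * b + b ^ 2 : ℤ) : ℝ) := by
    have hm : ‖v‖ ≤ max |(a:ℝ)| |(b:ℝ)| := by
      rw [pi_norm_le_iff_of_nonneg (by positivity)]
      intro i
      fin_cases i
      · exact le_max_left _ _
      · exact le_max_right _ _
    have hm2 : ‖v‖ ^ 2 ≤ (max |(a:ℝ)| |(b:ℝ)|) ^ 2 := by gcongr
    have : (3 / 4 : ℝ) * (max |(a:ℝ)| |(b:ℝ)|) ^ 2 ≤ ((a ^ 2 + a * b + b ^ 2 : ℤ) : ℝ) := by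
      push_cast
      rcases max_choice |(a:ℝ)| |(b:ℝ)| with h | h <;> rw [h, sq_abs]
      · nlinarith [sq_nonneg ((a:ℝ) / 2 + b)]
      · nlinarith [sq_nonneg ((a:ℝ) + b / 2)]
    linarith
  have key : hexG s (a, b) ≤ ((3 / 4 : ℝ) * ‖v‖ ^ 2) ^ (-(s / 2)) := by
    unfold hexG
    exact Real.rpow_le_rpow_of_nonpos (by positivity) hle (by linarith)
  refine key.trans (le_of_eq ?_)
  rw [Real.mul_rpow (by norm_num) (by positivity), ← Real.rpow_natCast, ← Real.rpow_mul hvpos.le]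
  congr 2
  push_cast; ring

lemma hex_tsum_eq (s : ℝ) (hs : 2 < s) :
    ∑' p : {p : ℤ × ℤ // p ≠ 0},
      ((p.1.1 ^ 2 + p.1.1 * p.1.2 + p.1.2 ^ 2 : ℤ) : ℝ) ^ (-(s / 2)) = ∑' p, hexG s p := by
  have := tsum_subtype_eq_of_support_subset (f := hexG s) (s := {p : ℤ × ℤ | p ≠ 0}) (by
    intro p hp h
    apply hp
    rw [h, hexG_zero s hs])
  exact this

lemma edist_rpow_le (s : ℝ) (hs : 0 < s) (x y : E3) (d : ℝ) (hd : 0 < d) (h : d ≤ dist x y) :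
    edist x y ^ (-s) ≤ ENNReal.ofReal (d ^ (-s)) := by
  rw [edist_dist, ENNReal.ofReal_rpow_of_pos (hd.trans_le h)]
  exact ENNReal.ofReal_le_ofReal (Real.rpow_le_rpow_of_nonpos hd h (by linarith))

lemma fixed_bound (s : ℝ) (hs : 2 < s) {ι : Type} [Fintype ι] (a b : ι → ℝ)
    (F : ι → ℝ → ℝ → E3) (κ δ : ℝ) (hκ : 0 < κ) (hδ : 0 < δ)
    (hsph : ∀ i x y, F i x y ∈ sphere (0 : E3) 1)
    (hin : ∀ i x y x' y', x ∈ Set.Icc 0 (a i) → y ∈ Set.Icc 0 (b i) →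
      x' ∈ Set.Icc 0 (a i) → y' ∈ Set.Icc 0 (b i) →
      κ ^ 2 * ((x - x') ^ 2 + (y - y') ^ 2) ≤ dist (F i x y) (F i x' y') ^ 2)
    (hout : ∀ i j, i ≠ j → ∀ x y x' y', x ∈ Set.Icc 0 (a i) → y ∈ Set.Icc 0 (b i) →
      x' ∈ Set.Icc 0 (a j) → y' ∈ Set.Icc 0 (b j) →
      δ ≤ dist (F i x y) (F j x' y'))
    (K M : ι → ℕ) (r : ℝ) (hr : 0 < r) (hK : ∀ i, K i * r ≤ a i)
    (hM : ∀ i, M i * (r * (√3 / 2)) ≤ b i) (N : ℕ) (hN : N ≤ ∑ i, K i * M i) :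
    (minRieszEnergy s 2 N).toReal ≤
      N * ((κ * r) ^ (-s) * (∑' p, hexG s p) + N * δ ^ (-s)) := by
  classical
  have hcard : Fintype.card (Fin N) ≤ Fintype.card (Σ i, Fin (K i) × Fin (M i)) := by
    simpa using hN
  obtain ⟨f⟩ := Function.Embedding.nonempty_of_card_le hcard
  let L : (Σ i, Fin (K i) × Fin (M i)) → ℤ × ℤ :=
    fun e => (((e.2.1 : ℕ) : ℤ) - ((e.2.2 : ℕ) : ℤ) / 2, ((e.2.2 : ℕ) : ℤ))
  let X : (Σ i, Fin (K i) × Fin (M i)) → ℝ := fun e => r * ((L e).1 + (L e).2 / 2)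
  let Y : (Σ i, Fin (K i) × Fin (M i)) → ℝ := fun e => r * (√3 / 2) * (L e).2
  have h3 : (√3) ^ 2 = 3 := Real.sq_sqrt (by norm_num)
  have hX : ∀ e, X e ∈ Set.Icc 0 (a e.1) := by
    rintro ⟨i, k, n⟩
    have hk : ((k : ℕ) : ℝ) + 1 ≤ K i := by exact_mod_cast k.2
    have e1 : (2:ℝ) * (((n : ℕ) : ℤ) / 2 : ℤ) + ((((n:ℕ) : ℤ) % 2 : ℤ) : ℝ) = ((n : ℕ) : ℝ) := by
      exact_mod_cast Int.mul_ediv_add_emod ((n:ℕ):ℤ) 2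
    have e2 : (0:ℝ) ≤ ((((n:ℕ) : ℤ) % 2 : ℤ) : ℝ) := by
      have : 0 ≤ ((n:ℕ) : ℤ) % 2 := by omega
      exact_mod_cast this
    have e3 : ((((n:ℕ) : ℤ) % 2 : ℤ) : ℝ) ≤ 1 := by
      have : ((n:ℕ) : ℤ) % 2 ≤ 1 := by omega
      exact_mod_cast this
    have hx : X ⟨i, k, n⟩ = r * (((k:ℕ):ℝ) + ((((n:ℕ) : ℤ) % 2 : ℤ) : ℝ) / 2) := by
      simp only [X, L]
      push_cast [-Int.cast_natCast] at e1 ⊢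
      push_cast
      linear_combination (-r / 2) * e1
    rw [hx]
    have hk0 : (0:ℝ) ≤ ((k:ℕ):ℝ) := by positivity
    constructor
    · positivity
    · refine le_trans ?_ (hK i)
      rw [mul_comm]
      gcongr
      linarith
  have hY : ∀ e, Y e ∈ Set.Icc 0 (b e.1) := by
    rintro ⟨i, k, n⟩
    have hk : ((n : ℕ) : ℝ) ≤ M i := by exact_mod_cast n.2.le
    simp only [Y, L]
    constructor
    · positivity
    · refine le_trans ?_ (hM i)
      rw [mul_comm]
      push_cast
      gcongr
  have hL : ∀ e e' : (Σ i, Fin (K i) × Fin (M i)), e.1 = e'.1 → L e = L e' → e = e' := by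
    rintro ⟨i, k, n⟩ ⟨i', k', n'⟩ h1 h2
    simp only at h1
    subst h1
    simp only [L, Prod.mk.injEq] at h2
    have hn : n = n' := by ext; exact_mod_cast h2.2
    subst hn
    have hk : k = k' := by ext; have := h2.1; omega
    subst hk
    rfl
  set x : Fin N → E3 := fun j => F (f j).1 (X (f j)) (Y (f j)) with hxdef
  have hκs : 0 ≤ (κ * r) ^ (-s) := by positivity
  have hδs : 0 ≤ δ ^ (-s) := by positivity
  let u : Fin N → Fin N → ℝ := fun j k =>
    (κ * r) ^ (-s) * (if (f k).1 = (f j).1 then hexG s (L (f k) - L (f j)) else 0) + δ ^ (-s)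
  have hu0 : ∀ j k, 0 ≤ u j k := by
    intro j k
    have := hexG_nonneg s (L (f k) - L (f j))
    simp only [u]
    split_ifs <;> positivity
  have hterm : ∀ j k, (if j ≠ k then edist (x j) (x k) ^ (-s) else 0) ≤
      ENNReal.ofReal (u j k) := by
    intro j k
    split_ifs with hjk
    swap
    · simp
    by_cases hp : (f k).1 = (f j).1
    · set p := L (f k) - L (f j) with hpdef
      have hp0 : p ≠ 0 := by
        intro h
        exact hjk (f.injective (hL _ _ hp (sub_eq_zero.mp h))).symm
      have hd : κ ^ 2 * (r ^ 2 * ((p.1 ^ 2 + p.1 * p.2 + p.2 ^ 2 : ℤ) : ℝ)) ≤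
          dist (x j) (x k) ^ 2 := by
        have := hin (f j).1 (X (f j)) (Y (f j)) (X (f k)) (Y (f k)) (hX _) (hY _)
          (hp ▸ hX (f k)) (hp ▸ hY (f k))
        have e : F (f j).1 (X (f k)) (Y (f k)) = x k := by simp only [hxdef, hp]
        rw [e] at this
        refine le_trans (le_of_eq ?_) this
        congr 1
        simp only [X, Y, hpdef, Prod.fst_sub, Prod.snd_sub]
        push_cast
        linear_combination (-(r ^ 2 / 4 * (((L (f j)).2 : ℝ) - (L (f k)).2) ^ 2)) * h3
      have hQ : (0:ℝ) < ((p.1 ^ 2 + p.1 * p.2 + p.2 ^ 2 : ℤ) : ℝ) := by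
        push_cast
        by_contra hcon
        apply hp0
        have h1 : (p.2:ℝ) = 0 := by
          nlinarith [sq_nonneg ((p.1:ℝ) + p.2 / 2), sq_nonneg (p.2:ℝ)]
        have h2 : (p.1:ℝ) = 0 := by
          rw [h1] at hcon
          nlinarith [sq_nonneg (p.1:ℝ)]
        ext
        · exact_mod_cast h2
        · exact_mod_cast h1
      set Q := ((p.1 ^ 2 + p.1 * p.2 + p.2 ^ 2 : ℤ) : ℝ) with hQdef
      have hd' : κ * r * √Q ≤ dist (x j) (x k) := by
        apply le_of_sq_le_sq _ dist_nonneg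
        rw [mul_pow, mul_pow, Real.sq_sqrt hQ.le]
        linarith
      refine (edist_rpow_le s (by linarith) _ _ _ (by positivity) hd').trans ?_
      apply ENNReal.ofReal_le_ofReal
      simp only [u, if_pos hp]
      rw [Real.mul_rpow (by positivity) (by positivity), Real.sqrt_eq_rpow, ← Real.rpow_mul hQ.le]
      have : hexG s p = Q ^ (1 / 2 * -s) := by
        simp only [hexG]
        rw [← hQdef]
        congr 1; ring
      rw [← hpdef, this]
      linarith
    · refine (edist_rpow_le s (by linarith) _ _ δ hδ (hout _ _ (Ne.symm hp) _ _ _ _ (hX _) (hY _) (hX _) (hY _))).trans ?_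
      apply ENNReal.ofReal_le_ofReal
      simp only [u, if_neg hp]
      linarith
  have hrow : ∀ j, ∑ k, u j k ≤ (κ * r) ^ (-s) * (∑' p, hexG s p) + N * δ ^ (-s) := by
    intro j
    simp only [u]
    rw [Finset.sum_add_distrib, ← Finset.mul_sum, ← Finset.sum_filter]
    simp only [Finset.sum_const, Finset.card_univ, Fintype.card_fin, nsmul_eq_mul]
    gcongr
    have hinj : Set.InjOn (fun k => L (f k) - L (f j))
        (Finset.univ.filter (fun k => (f k).1 = (f j).1) : Finset (Fin N)) := by
      intro k hk k' hk' h
      simp only [Finset.coe_filter, Finset.mem_univ, true_and, Set.mem_ofPred_eq] at hk hk'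
      exact f.injective (hL _ _ (hk.trans hk'.symm) (sub_left_injective h))
    rw [← Finset.sum_image (f := hexG s) hinj]
    exact (hexG_summable s hs).sum_le_tsum _ (fun p _ => hexG_nonneg s p)
  have hζ : 0 ≤ ∑' p, hexG s p := tsum_nonneg (hexG_nonneg s)
  have hE : minRieszEnergy s 2 N ≤ ENNReal.ofReal
      (N * ((κ * r) ^ (-s) * (∑' p, hexG s p) + N * δ ^ (-s))) := by
    refine (iInf_le _ ⟨x, fun k => hsph _ _ _⟩).trans ?_
    refine (Finset.sum_le_sum fun j _ => Finset.sum_le_sum fun k _ => hterm j k).trans ?_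
    simp_rw [← ENNReal.ofReal_sum_of_nonneg (fun k _ => hu0 _ k)]
    rw [← ENNReal.ofReal_sum_of_nonneg (fun j _ => Finset.sum_nonneg fun k _ => hu0 j k)]
    apply ENNReal.ofReal_le_ofReal
    refine (Finset.sum_le_sum fun j _ => hrow j).trans ?_
    rw [Finset.sum_const, Finset.card_univ, Fintype.card_fin, nsmul_eq_mul]
  exact ENNReal.toReal_le_of_le_ofReal (by positivity) hE

lemma asym_bound (s : ℝ) (hs : 2 < s) {ι : Type} [Fintype ι] (a b : ι → ℝ)
    (ha : ∀ i, 0 ≤ a i) (hb : ∀ i, 0 ≤ b i)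
    (F : ι → ℝ → ℝ → E3) (κ δ : ℝ) (hκ : 0 < κ) (hδ : 0 < δ)
    (hsph : ∀ i x y, F i x y ∈ sphere (0 : E3) 1)
    (hin : ∀ i x y x' y', x ∈ Set.Icc 0 (a i) → y ∈ Set.Icc 0 (b i) →
      x' ∈ Set.Icc 0 (a i) → y' ∈ Set.Icc 0 (b i) →
      κ ^ 2 * ((x - x') ^ 2 + (y - y') ^ 2) ≤ dist (F i x y) (F i x' y') ^ 2)
    (hout : ∀ i j, i ≠ j → ∀ x y x' y', x ∈ Set.Icc 0 (a i) → y ∈ Set.Icc 0 (b i) →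
      x' ∈ Set.Icc 0 (a j) → y' ∈ Set.Icc 0 (b j) →
      δ ≤ dist (F i x y) (F j x' y'))
    (D : ℝ) (hD : 0 < D) (hDA : D < ∑ i, a i * (b i / (√3 / 2))) (ε : ℝ) (hε : 0 < ε) :
    ∀ᶠ N : ℕ in atTop, (minRieszEnergy s 2 N).toReal / (N : ℝ) ^ ((1 : ℝ) + s / 2) ≤
      κ ^ (-s) * D ^ (-(s / 2)) * (∑' p, hexG s p) + ε := by
  have ht : Tendsto (fun N : ℕ => √((N:ℝ) / D)) atTop atTop :=
    Real.tendsto_sqrt_atTop.comp (tendsto_natCast_atTop_atTop.atTop_div_const hD)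
  set B := ∑ i, (a i + b i / (√3 / 2)) with hB
  set A := ∑ i, a i * (b i / (√3 / 2)) with hA
  have hsmall : Tendsto (fun N : ℕ => (N:ℝ) ^ (-(s / 2 - 1)) * δ ^ (-s)) atTop (𝓝 0) := by
    have := ((tendsto_rpow_neg_atTop (show 0 < s / 2 - 1 by linarith)).comp
      (tendsto_natCast_atTop_atTop (R := ℝ))).mul_const (δ ^ (-s))
    simpa [Function.comp_def] using this
  filter_upwards [ht.eventually_ge_atTop (B / (A - D)), eventually_gt_atTop 0,
    hsmall.eventually_le_const hε] with N hN1 hN0 hN2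
  have hNpos : (0:ℝ) < N := by exact_mod_cast hN0
  set t := √((N:ℝ) / D) with htdef
  have htpos : 0 < t := Real.sqrt_pos.mpr (by positivity)
  have ht2 : t ^ 2 * D = N := by
    rw [htdef, Real.sq_sqrt (by positivity)]
    field_simp
  have h3 : (0:ℝ) < √3 / 2 := by positivity
  let K : ι → ℕ := fun i => ⌊a i * t⌋₊
  let M : ι → ℕ := fun i => ⌊b i / (√3 / 2) * t⌋₊
  have hβ : ∀ i, 0 ≤ b i / (√3 / 2) := fun i => div_nonneg (hb i) h3.le
  have hKle : ∀ i, (K i : ℝ) ≤ a i * t := fun i => Nat.floor_le (mul_nonneg (ha i) htpos.le)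
  have hMle : ∀ i, (M i : ℝ) ≤ b i / (√3 / 2) * t :=
    fun i => Nat.floor_le (mul_nonneg (hβ i) htpos.le)
  have hKge : ∀ i, a i * t - 1 ≤ K i := fun i => by
    have := (Nat.lt_floor_add_one (a i * t)).le
    simp only [K]; linarith
  have hMge : ∀ i, b i / (√3 / 2) * t - 1 ≤ M i := fun i => by
    have := (Nat.lt_floor_add_one (b i / (√3 / 2) * t)).le
    simp only [M]; linarith
  have hcount : N ≤ ∑ i, K i * M i := by
    have h1 : ∀ i, a i * (b i / (√3 / 2)) * t ^ 2 - (a i + b i / (√3 / 2)) * t ≤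
        (K i : ℝ) * M i := by
      intro i
      have e1 := mul_le_mul_of_nonneg_right (hKge i) (mul_nonneg (hβ i) htpos.le)
      have e2 : (K i : ℝ) * (b i / (√3 / 2) * t - 1) ≤ K i * M i :=
        mul_le_mul_of_nonneg_left (hMge i) (Nat.cast_nonneg _)
      have e3 := hKle i
      nlinarith
    have h2 : A * t ^ 2 - B * t ≤ ∑ i, (K i : ℝ) * M i := by
      rw [hA, hB, Finset.sum_mul, Finset.sum_mul, ← Finset.sum_sub_distrib]
      exact Finset.sum_le_sum fun i _ => h1 i
    have h4 : B ≤ t * (A - D) := (div_le_iff₀ (by linarith)).mp hN1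
    have h5 : (N:ℝ) ≤ ∑ i, (K i : ℝ) * M i := by
      rw [← ht2]
      nlinarith [mul_le_mul_of_nonneg_right h4 htpos.le]
    exact_mod_cast h5
  have hmain := fixed_bound s hs a b F κ δ hκ hδ hsph hin hout K M (1 / t) (by positivity)
    (fun i => by
      rw [mul_one_div, div_le_iff₀ htpos]; exact hKle i)
    (fun i => by
      have := hMle i
      rw [div_mul_eq_mul_div, le_div_iff₀ h3] at this
      have e : (M i : ℝ) * (1 / t * (√3 / 2)) = (M i * (√3 / 2)) / t := by ring
      rw [e, div_le_iff₀ htpos]; exact this) N hcount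
  rw [div_le_iff₀ (by positivity)]
  refine hmain.trans ?_
  have e1 : (κ * (1 / t)) ^ (-s) = κ ^ (-s) * (D ^ (-(s / 2)) * (N:ℝ) ^ (s / 2)) := by
    rw [Real.mul_rpow hκ.le (by positivity)]
    congr 1
    rw [one_div, Real.inv_rpow htpos.le, ← Real.rpow_neg htpos.le, neg_neg, htdef,
      Real.sqrt_eq_rpow, ← Real.rpow_mul (by positivity), Real.div_rpow hNpos.le hD.le,
      Real.rpow_neg hD.le, show (1:ℝ) / 2 * s = s / 2 by ring]
    field_simp
  have e2 : (N:ℝ) ^ ((1:ℝ) + s / 2) = N * (N:ℝ) ^ (s / 2) := by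
    rw [Real.rpow_add hNpos, Real.rpow_one]
  have e3 : (N:ℝ) = (N:ℝ) ^ (-(s / 2 - 1)) * (N:ℝ) ^ (s / 2) := by
    rw [← Real.rpow_add hNpos]
    norm_num
  have e4 : (N:ℝ) * δ ^ (-s) ≤ ε * (N:ℝ) ^ (s / 2) := by
    have := mul_le_mul_of_nonneg_right hN2 (show 0 ≤ (N:ℝ) ^ (s / 2) by positivity)
    calc (N:ℝ) * δ ^ (-s) = ((N:ℝ) ^ (-(s / 2 - 1)) * (N:ℝ) ^ (s / 2)) * δ ^ (-s) := by rw [← e3]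
      _ = (N:ℝ) ^ (-(s / 2 - 1)) * δ ^ (-s) * (N:ℝ) ^ (s / 2) := by ring
      _ ≤ _ := this
  rw [e1, e2]
  have := mul_le_mul_of_nonneg_left e4 hNpos.le
  nlinarith

def sph (θ φ : ℝ) : E3 := !₂[cos φ * cos θ, cos φ * sin θ, sin φ]

lemma sph_mem (θ φ : ℝ) : sph θ φ ∈ sphere (0 : E3) 1 := by
  rw [mem_sphere_zero_iff_norm, EuclideanSpace.norm_eq, Real.sqrt_eq_one]
  simp only [sph, Real.norm_eq_abs, sq_abs]
  simp [Fin.sum_univ_succ]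
  linear_combination (cos φ) ^ 2 * sin_sq_add_cos_sq θ + sin_sq_add_cos_sq φ

lemma four_sin_sq (x : ℝ) : 4 * sin (x / 2) ^ 2 = 2 - 2 * cos x := by
  have := Real.cos_sq' (x / 2)
  have h2 := Real.cos_two_mul (x / 2)
  rw [mul_div_cancel₀ x (by norm_num : (2:ℝ) ≠ 0)] at h2
  linarith

lemma sph_dist_sq (θ φ θ' φ' : ℝ) : dist (sph θ φ) (sph θ' φ') ^ 2 =
    4 * sin ((φ - φ') / 2) ^ 2 + cos φ * cos φ' * (4 * sin ((θ - θ') / 2) ^ 2) := by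
  rw [EuclideanSpace.dist_eq, Real.sq_sqrt (by positivity), four_sin_sq, four_sin_sq]
  simp only [sph, Real.dist_eq, sq_abs]
  simp [Fin.sum_univ_succ]
  rw [Real.cos_sub, Real.cos_sub]
  linear_combination (cos φ) ^ 2 * sin_sq_add_cos_sq θ + sin_sq_add_cos_sq φ +
    (cos φ') ^ 2 * sin_sq_add_cos_sq θ' + sin_sq_add_cos_sq φ'

lemma gap_lem (w κ : ℝ) (hw : 0 ≤ w) (m j j' : ℕ) (hj : j < m) (hj' : j' < m) (hne : j ≠ j')
    (u u' : ℝ) (hu : u ∈ Set.Icc 0 (κ * w)) (hu' : u' ∈ Set.Icc 0 (κ * w)) (c : ℝ) :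
    (1 - κ) * w ≤ |(c + j * w + u) - (c + j' * w + u')| ∧
    |(c + j * w + u) - (c + j' * w + u')| ≤ m * w - (1 - κ) * w := by
  obtain ⟨h1, h2⟩ := hu
  obtain ⟨h3, h4⟩ := hu'
  have hjm : (j:ℝ) + 1 ≤ m := by exact_mod_cast hj
  have hjm' : (j':ℝ) + 1 ≤ m := by exact_mod_cast hj'
  have p1 := mul_le_mul_of_nonneg_right hjm hw
  have p2 := mul_le_mul_of_nonneg_right hjm' hw
  have p3 : 0 ≤ (j:ℝ) * w := by positivity
  have p4 : 0 ≤ (j':ℝ) * w := by positivity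
  rcases lt_or_gt_of_ne hne with h | h
  · have : (j:ℝ) + 1 ≤ j' := by exact_mod_cast h
    have := mul_le_mul_of_nonneg_right this hw
    constructor
    · rw [le_abs]; right; nlinarith
    · rw [abs_le]; constructor <;> nlinarith
  · have : (j':ℝ) + 1 ≤ j := by exact_mod_cast h
    have := mul_le_mul_of_nonneg_right this hw
    constructor
    · rw [le_abs]; left; nlinarith
    · rw [abs_le]; constructor <;> nlinarith

lemma sin_sq_gap (g x : ℝ) (hg : 0 ≤ g) (h1 : g ≤ |x|) (h2 : |x| ≤ 2 * π - g) :
    4 * sin (g / 2) ^ 2 ≤ 4 * sin (x / 2) ^ 2 := by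
  rw [four_sin_sq, four_sin_sq]
  have : cos x ≤ cos g := by
    rw [← Real.cos_abs x]
    rcases le_total |x| π with h | h
    · exact Real.cos_le_cos_of_nonneg_of_le_pi hg h h1
    · rw [← Real.cos_two_pi_sub |x|]
      exact Real.cos_le_cos_of_nonneg_of_le_pi hg (by linarith) (by linarith)
  linarith

lemma sin_small (κ : ℝ) (h0 : 0 < κ) (h1 : κ < 1) :
    ∃ h > 0, ∀ x : ℝ, |x| ≤ h → κ ^ 2 * x ^ 2 ≤ 4 * sin (x / 2) ^ 2 := by
  refine ⟨2 * √(6 * (1 - κ)), by have : 0 < 6 * (1 - κ) := by linarith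
                                 positivity, ?_⟩
  intro x hx
  have hx2 : 4 * sin (x / 2) ^ 2 = 4 * sin (|x| / 2) ^ 2 := by
    rw [four_sin_sq, four_sin_sq, Real.cos_abs]
  rw [hx2, ← sq_abs x]
  rcases (abs_nonneg x).eq_or_lt with h | h
  · rw [← h]; simp
  set y := |x| / 2 with hy
  have hypos : 0 < y := by positivity
  have hy2 : y ^ 2 ≤ 6 * (1 - κ) := by
    have : y ≤ √(6 * (1 - κ)) := by linarith
    calc y ^ 2 ≤ √(6 * (1 - κ)) ^ 2 := by gcongr
      _ = _ := Real.sq_sqrt (by linarith)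
  have hsin := Real.sin_gt_sub_cube hypos
  have : κ * y ≤ sin y := by nlinarith
  have h4 : (κ * y) ^ 2 ≤ sin y ^ 2 := by gcongr
  have : |x| = 2 * y := by rw [hy]; ring
  rw [this]
  linarith

lemma pieces (κ : ℝ) (h0 : 0 < κ) (h1 : κ < 1) :
    ∃ (n m : ℕ) (a b : Fin n × Fin m → ℝ) (F : Fin n × Fin m → ℝ → ℝ → E3) (δ : ℝ), 0 < δ ∧
    (∀ i, 0 ≤ a i) ∧ (∀ i, 0 ≤ b i) ∧
    (∀ i x y, F i x y ∈ sphere (0 : E3) 1) ∧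
    (∀ i x y x' y', x ∈ Set.Icc 0 (a i) → y ∈ Set.Icc 0 (b i) →
      x' ∈ Set.Icc 0 (a i) → y' ∈ Set.Icc 0 (b i) →
      κ ^ 2 * ((x - x') ^ 2 + (y - y') ^ 2) ≤ dist (F i x y) (F i x' y') ^ 2) ∧
    (∀ i j, i ≠ j → ∀ x y x' y', x ∈ Set.Icc 0 (a i) → y ∈ Set.Icc 0 (b i) →
      x' ∈ Set.Icc 0 (a j) → y' ∈ Set.Icc 0 (b j) →
      δ ≤ dist (F i x y) (F j x' y')) ∧
    4 * π * κ ^ 4 ≤ ∑ i, a i * b i := by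
  obtain ⟨e, he, hsm⟩ := sin_small κ h0 h1
  have hpi := Real.pi_pos
  set α := arcsin κ with hα
  have hα0 : 0 < α := Real.arcsin_pos.mpr h0
  have hα1 : α < π / 2 := Real.arcsin_lt_pi_div_two.mpr h1
  have hsα : sin α = κ := Real.sin_arcsin (by linarith) h1.le
  set c := cos α with hc
  have hc0 : 0 < c := Real.cos_pos_of_mem_Ioo ⟨by linarith, hα1⟩
  have hcos : ∀ φ, |φ| ≤ α → c ≤ cos φ := by
    intro φ hφ
    rw [← Real.cos_abs φ]
    exact Real.cos_le_cos_of_nonneg_of_le_pi (abs_nonneg _) (by linarith) hφ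
  obtain ⟨n, hn⟩ := exists_nat_gt (max (2 * α / e) (2 * α / (2 * c * (1 - κ))))
  obtain ⟨m, hm⟩ := exists_nat_gt (2 * π / e)
  have hk1 : 0 < 1 - κ := by linarith
  have hn0 : (0:ℝ) < n := lt_of_le_of_lt (by positivity) ((le_max_left _ _).trans_lt hn)
  have hm0 : (0:ℝ) < m := lt_of_le_of_lt (by positivity) hm
  set h := 2 * α / n with hh
  set w := 2 * π / m with hw
  have hhpos : 0 < h := by positivity
  have hwpos : 0 < w := by positivity
  have hnh : n * h = 2 * α := by rw [hh]; field_simp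
  have hmw : m * w = 2 * π := by rw [hw]; field_simp
  have hhe : h ≤ e := by
    have := (le_max_left _ _).trans_lt hn
    rw [div_lt_iff₀ he] at this
    rw [hh, div_le_iff₀ hn0]; linarith
  have hhc : h ≤ 2 * c * (1 - κ) := by
    have := (le_max_right _ _).trans_lt hn
    rw [div_lt_iff₀ (by positivity)] at this
    rw [hh, div_le_iff₀ hn0]; linarith
  have hwe : w ≤ e := by
    rw [div_lt_iff₀ he] at hm
    rw [hw, div_le_iff₀ hm0]; linarith
  have hn1 : (1:ℝ) ≤ n := by
    have : 0 < n := by exact_mod_cast hn0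
    exact_mod_cast this
  let mid : ℕ → ℝ := fun i => cos (-α + i * h + h / 2)
  have hband : ∀ i : Fin n, ∀ y, 0 ≤ y → y ≤ h → |(-α + (i:ℕ) * h + y)| ≤ α := by
    intro i y hy0 hy1
    have : ((i:ℕ):ℝ) + 1 ≤ n := by exact_mod_cast i.2
    have := mul_le_mul_of_nonneg_right this hhpos.le
    have p3 : 0 ≤ ((i:ℕ):ℝ) * h := by positivity
    rw [abs_le]; constructor <;> linarith
  have hmidc : ∀ i : Fin n, c ≤ mid i := fun i =>
    hcos _ (hband i (h / 2) (by linarith) (by linarith))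
  have hmid0 : ∀ i : Fin n, 0 < mid i := fun i => hc0.trans_le (hmidc i)
  have hcosmid : ∀ i : Fin n, ∀ y, 0 ≤ y → y ≤ h → κ * mid i ≤ cos (-α + (i:ℕ) * h + y) := by
    intro i y hy0 hy1
    have hl : |cos (-α + (i:ℕ) * h + h / 2) - cos (-α + (i:ℕ) * h + y)| ≤
        |(-α + (i:ℕ) * h + h / 2) - (-α + (i:ℕ) * h + y)| := by
      simpa [Real.dist_eq] using Real.lipschitzWith_cos.dist_le_mul
        (-α + (i:ℕ) * h + h / 2) (-α + (i:ℕ) * h + y)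
    have h2 : |(-α + (i:ℕ) * h + h / 2) - (-α + (i:ℕ) * h + y)| ≤ h / 2 := by
      rw [abs_le]; constructor <;> linarith
    have h3 := (le_abs_self _).trans (hl.trans h2)
    have h4 := mul_le_mul_of_nonneg_left (hmidc i) hk1.le
    simp only [mid] at h4 ⊢
    linarith
  have hg1 : 0 < (1 - κ) * h := by positivity
  have hg2 : 0 < (1 - κ) * w := by positivity
  have hh2α : h ≤ 2 * α := by nlinarith
  have hw2π : w ≤ 2 * π := by
    have : (1:ℝ) ≤ m := by
      have : 0 < m := by exact_mod_cast hm0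
      exact_mod_cast this
    nlinarith
  have hκh : κ * h ≤ h := by nlinarith
  have hκw : κ * w ≤ w := by nlinarith
  have hs1 : 0 < sin ((1 - κ) * h / 2) := Real.sin_pos_of_pos_of_lt_pi (by positivity) (by nlinarith)
  have hs2 : 0 < sin ((1 - κ) * w / 2) := Real.sin_pos_of_pos_of_lt_pi (by positivity) (by nlinarith)
  -- the angular coordinate stays in its sector
  have hang : ∀ (i : Fin n) x, x ∈ Set.Icc 0 (κ * mid i * (κ * w)) →
      x / (κ * mid i) ∈ Set.Icc 0 (κ * w) := by
    rintro i x ⟨hx0, hx1⟩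
    have := mul_pos h0 (hmid0 i)
    refine ⟨by positivity, ?_⟩
    rw [div_le_iff₀ this]; linarith
  refine ⟨n, m, fun p => κ * mid p.1 * (κ * w), fun _ => κ * h,
    fun p x y => sph (0 + (p.2 : ℕ) * w + x / (κ * mid p.1)) (-α + (p.1 : ℕ) * h + y),
    min (2 * sin ((1 - κ) * h / 2)) (2 * (c * sin ((1 - κ) * w / 2))), by positivity,
    fun p => by have := hmid0 p.1; positivity, fun _ => by positivity,
    fun _ _ _ => sph_mem _ _, ?_, ?_, ?_⟩
  · rintro ⟨i, j⟩ x y x' y' hx hy hx' hy'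
    simp only at hx hy hx' hy' ⊢
    have hmp := mul_pos h0 (hmid0 i)
    have hX := hang i x hx
    have hX' := hang i x' hx'
    rw [sph_dist_sq]
    have d1 : |(-α + (i:ℕ) * h + y) - (-α + (i:ℕ) * h + y')| ≤ e := by
      rw [abs_le]; constructor <;> linarith [hy.1, hy.2, hy'.1, hy'.2]
    have d2 : |(0 + (j:ℕ) * w + x / (κ * mid i)) - (0 + (j:ℕ) * w + x' / (κ * mid i))| ≤ e := by
      rw [abs_le]; constructor <;> linarith [hX.1, hX.2, hX'.1, hX'.2]
    have q1 := hsm _ d1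
    have q2 := hsm _ d2
    have c1 := hcosmid i y hy.1 (hy.2.trans hκh)
    have c2 := hcosmid i y' hy'.1 (hy'.2.trans hκh)
    have c3 : (κ * mid i) * (κ * mid i) ≤
        cos (-α + (i:ℕ) * h + y) * cos (-α + (i:ℕ) * h + y') :=
      mul_le_mul c1 c2 hmp.le (hmp.le.trans c1)
    have q3 := mul_le_mul c3 q2 (by positivity) ((mul_pos hmp hmp).le.trans c3)
    have q4 : (κ * mid i) * (κ * mid i) * (κ ^ 2 *
        ((0 + (j:ℕ) * w + x / (κ * mid i)) - (0 + (j:ℕ) * w + x' / (κ * mid i))) ^ 2) =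
        κ ^ 2 * (x - x') ^ 2 := by
      have : (0 + (j:ℕ) * w + x / (κ * mid i)) - (0 + (j:ℕ) * w + x' / (κ * mid i)) =
        (x - x') / (κ * mid i) := by ring
      have hne := hmp.ne'
      rw [this, div_pow]
      generalize κ * mid i = q at hne
      field_simp
    rw [q4] at q3
    have q5 : (-α + (i:ℕ) * h + y) - (-α + (i:ℕ) * h + y') = y - y' := by ring
    rw [q5] at q1 ⊢
    linarith
  · rintro ⟨i, j⟩ ⟨i', j'⟩ hne x y x' y' hx hy hx' hy'
    simp only at hx hy hx' hy' ⊢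
    have hX := hang i x hx
    have hX' := hang i' x' hx'
    have c1 := hcos _ (hband i y hy.1 (hy.2.trans hκh))
    have c2 := hcos _ (hband i' y' hy'.1 (hy'.2.trans hκh))
    have c3 : c * c ≤ cos (-α + (i:ℕ) * h + y) * cos (-α + (i':ℕ) * h + y') :=
      mul_le_mul c1 c2 hc0.le (hc0.le.trans c1)
    by_cases hi : i = i'
    · have hj : (j:ℕ) ≠ j' := by
        intro hj
        exact hne (Prod.ext hi (Fin.ext hj))
      refine (min_le_right _ _).trans ?_
      apply le_of_sq_le_sq _ dist_nonneg
      rw [sph_dist_sq]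
      obtain ⟨g1, g2⟩ := gap_lem w κ hwpos.le m j j' j.2 j'.2 hj _ _ hX hX' 0
      have := sin_sq_gap _ _ hg2.le g1 (by linarith)
      have := mul_le_mul c3 this (by positivity) ((mul_pos hc0 hc0).le.trans c3)
      have z := sq_nonneg (sin (((-α + (i:ℕ) * h + y) - (-α + (i':ℕ) * h + y')) / 2))
      linarith
    · have hi' : (i:ℕ) ≠ i' := fun hh => hi (Fin.ext hh)
      refine (min_le_left _ _).trans ?_
      apply le_of_sq_le_sq _ dist_nonneg
      rw [sph_dist_sq]
      obtain ⟨g1, g2⟩ := gap_lem h κ hhpos.le n i i' i.2 i'.2 hi' y y' hy hy' (-α)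
      have := sin_sq_gap _ _ hg1.le g1 (by linarith)
      have z := mul_nonneg ((mul_pos hc0 hc0).le.trans c3) (show 0 ≤ 4 * sin (((0 + (j:ℕ) * w + x / (κ * mid i)) - (0 + (j':ℕ) * w + x' / (κ * mid i'))) / 2) ^ 2 by positivity)
      linarith
  · have tele : 2 * κ ≤ ∑ i : Fin n, h * mid i := by
      rw [Fin.sum_univ_eq_sum_range (fun i => h * mid i) n]
      have : ∑ i ∈ Finset.range n, (sin (-α + (i + 1 : ℕ) * h) - sin (-α + (i : ℕ) * h)) =
          2 * κ := by
        rw [Finset.sum_range_sub (fun i : ℕ => sin (-α + i * h)), hnh]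
        simp only [Nat.cast_zero, zero_mul, add_zero, Real.sin_neg]
        rw [show -α + 2 * α = α by ring, hsα]; ring
      rw [← this]
      apply Finset.sum_le_sum
      intro i hi
      have hi' : i < n := Finset.mem_range.mp hi
      have hp : 0 < mid i := hmid0 ⟨i, hi'⟩
      rw [Real.sin_sub_sin]
      have e1 : (-α + (i + 1 : ℕ) * h - (-α + (i : ℕ) * h)) / 2 = h / 2 := by push_cast; ring
      have e2 : (-α + (i + 1 : ℕ) * h + (-α + (i : ℕ) * h)) / 2 = -α + i * h + h / 2 := by
        push_cast; ring
      rw [e1, e2]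
      have : sin (h / 2) ≤ h / 2 := Real.sin_le (by linarith)
      have := mul_le_mul_of_nonneg_right this hp.le
      simp only [mid] at this ⊢
      linarith
    rw [Fintype.sum_prod_type]
    simp only [Finset.sum_const, Finset.card_univ, Fintype.card_fin, nsmul_eq_mul]
    have e : ∀ i : Fin n, (m:ℝ) * (κ * mid i * (κ * w) * (κ * h)) = 2 * π * κ ^ 3 * (h * mid i) := by
      intro i
      rw [← hmw]; ring
    simp_rw [e]
    rw [← Finset.mul_sum]
    calc 4 * π * κ ^ 4 = 2 * π * κ ^ 3 * (2 * κ) := by ring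
      _ ≤ _ := by gcongr

/-- **Kuijlaars–Saff upper bound.** For `s > 2`,
`limsup_N E_s(S²;N)/N^{1+s/2} ≤ (√3/(8π))^{s/2} · ζ_Λ(s)`, where `ζ_Λ` is the zeta
function of the hexagonal lattice. -/
theorem kuijlaars_saff_upper_bound (s : ℝ) (hs : 2 < s) :
    Filter.limsup
        (fun N : ℕ => (minRieszEnergy s 2 N).toReal / (N : ℝ) ^ ((1 : ℝ) + s / 2)) atTop
      ≤ (Real.sqrt 3 / (8 * π)) ^ (s / 2) *
        ∑' p : {p : ℤ × ℤ // p ≠ 0},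
          ((p.1.1 ^ 2 + p.1.1 * p.1.2 + p.1.2 ^ 2 : ℤ) : ℝ) ^ (-(s / 2)) := by
  rw [hex_tsum_eq s hs]
  set Z := ∑' p, hexG s p with hZ
  have hpi := Real.pi_pos
  have h3 : (0:ℝ) < √3 := by positivity
  set u := fun N : ℕ => (minRieszEnergy s 2 N).toReal / (N : ℝ) ^ ((1 : ℝ) + s / 2) with hu
  have hcob : IsCoboundedUnder (· ≤ ·) atTop u :=
    IsCoboundedUnder.of_frequently_ge (a := 0) (Eventually.of_forall fun N => by
      simp only [hu]; positivity).frequently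
  have step : ∀ κ : ℝ, 0 < κ → κ < 1 → ∀ ε > 0,
      limsup u atTop ≤ κ ^ (-s) * (4 * π * κ ^ 5 / (√3 / 2)) ^ (-(s / 2)) * Z + ε := by
    intro κ h0 h1 ε hε
    obtain ⟨n, m, a, b, F, δ, hδ, ha, hb, hsph, hin, hout, hA⟩ := pieces κ h0 h1
    refine limsup_le_of_le hcob ?_
    refine asym_bound s hs a b ha hb F κ δ h0 hδ hsph hin hout _ (by positivity) ?_ ε hε
    simp_rw [← mul_div_assoc]
    rw [← Finset.sum_div]
    refine div_lt_div_of_pos_right (lt_of_lt_of_le ?_ hA) (by positivity)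
    have : κ ^ 5 < κ ^ 4 := pow_lt_pow_right_of_lt_one₀ h0 h1 (by norm_num)
    gcongr
  have step2 : ∀ κ : ℝ, 0 < κ → κ < 1 → 
      limsup u atTop ≤ κ ^ (-s) * (4 * π * κ ^ 5 / (√3 / 2)) ^ (-(s / 2)) * Z :=
    fun κ h0 h1 => le_of_forall_pos_le_add fun ε hε => step κ h0 h1 ε hε
  have hcont : Tendsto (fun κ : ℝ => κ ^ (-s) * (4 * π * κ ^ 5 / (√3 / 2)) ^ (-(s / 2)) * Z)
      (𝓝[<] 1) (𝓝 ((1:ℝ) ^ (-s) * (4 * π * 1 ^ 5 / (√3 / 2)) ^ (-(s / 2)) * Z)) := by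
    apply Tendsto.mono_left _ nhdsWithin_le_nhds
    have c1 : ContinuousAt (fun κ : ℝ => κ ^ (-s)) 1 :=
      Real.continuousAt_rpow_const _ _ (Or.inl one_ne_zero)
    have c2 : ContinuousAt (fun κ : ℝ => (4 * π * κ ^ 5 / (√3 / 2)) ^ (-(s / 2))) 1 := by
      apply ContinuousAt.rpow_const
      · fun_prop
      · left; positivity
    exact ((c1.mul c2).mul continuousAt_const).tendsto
  have hfin := ge_of_tendsto hcont (by
    filter_upwards [Ioo_mem_nhdsLT (show (0:ℝ) < 1 by norm_num)] with κ hκ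
    exact step2 κ hκ.1 hκ.2)
  refine hfin.trans (le_of_eq ?_)
  rw [Real.one_rpow, one_mul, one_pow, mul_one, Real.rpow_neg (by positivity),
    ← Real.inv_rpow (by positivity)]
  congr 2
  field_simp
  norm_num
end
end

section
/- Factorization of the hexagonal lattice zeta function: for every real s > 2 (more generally complex s with Re s > 2), ∑_{(m,n) ∈ Z² \ {(0,0)}} (m² + mn + n²)^{−s/2} = 6 · ζ(s/2) · L(χ, s/2), where ζ is the Riemann zeta function and χ is the unique nontrivial (quadratic) Dirichlet character modulo 3, so that L(χ, w) = ∑_{n≥1} χ(n) n^{−w} = 1 − 2^{−w} + 4^{−w} − 5^{−w} + 7^{−w} − ⋯. -/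
open MeasureTheory Metric Real Filter
open scoped BigOperators ENNReal NNReal Topology

noncomputable section

namespace HexZeta

/-- Representations of `n` by the form `x² + xy + y²`. -/
def S (n : ℕ) : Set (ℤ × ℤ) := {z | z.1 ^ 2 + z.1 * z.2 + z.2 ^ 2 = (n : ℤ)}

lemma mem_S {n : ℕ} {z : ℤ × ℤ} : z ∈ S n ↔ z.1 ^ 2 + z.1 * z.2 + z.2 ^ 2 = (n : ℤ) := Iff.rfl

lemma S_bound {n : ℕ} {x y : ℤ} (h : x ^ 2 + x * y + y ^ 2 = (n : ℤ)) :
    3 * x ^ 2 ≤ 4 * n ∧ 3 * y ^ 2 ≤ 4 * n := by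
  constructor
  · nlinarith [sq_nonneg (x + 2 * y)]
  · nlinarith [sq_nonneg (2 * x + y)]

lemma S_finite (n : ℕ) : (S n).Finite := by
  apply Set.Finite.subset ((Set.finite_Icc (-(2 * n : ℤ)) (2 * n)).prod
    (Set.finite_Icc (-(2 * n : ℤ)) (2 * n)))
  rintro ⟨x, y⟩ h
  obtain ⟨h1, h2⟩ := S_bound h
  have key : ∀ u : ℤ, 3 * u ^ 2 ≤ 4 * n → -(2 * n : ℤ) ≤ u ∧ u ≤ 2 * n := by
    intro u hu
    have hn : (0 : ℤ) ≤ n := Int.natCast_nonneg n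
    constructor
    · nlinarith [sq_nonneg (u + 1)]
    · nlinarith [sq_nonneg (u - 1)]
  simp only [Set.mem_prod, Set.mem_Icc]
  exact ⟨key x h1, key y h2⟩

/-- Number of representations. -/
def r (n : ℕ) : ℕ := (S n).ncard

lemma r_one : r 1 = 6 := by
  have : S 1 = ((({(1,0),(-1,0),(0,1),(0,-1),(1,-1),(-1,1)} : Finset (ℤ × ℤ))) : Set (ℤ × ℤ)) := by
    ext ⟨x, y⟩
    constructor
    · intro h
      obtain ⟨h1, h2⟩ := S_bound h
      rw [mem_S] at h
      push_cast at h h1 h2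
      have hx1 : x ≤ 1 := by nlinarith
      have hx2 : -1 ≤ x := by nlinarith
      have hy1 : y ≤ 1 := by nlinarith
      have hy2 : -1 ≤ y := by nlinarith
      interval_cases x <;> interval_cases y <;> simp_all
    · intro h
      simp at h
      rw [mem_S]
      rcases h with h | h | h | h | h | h <;> simp [h]
  rw [r, this, Set.ncard_coe_finset]
  decide

/-- multiples of `π = (c,d)` in `S (p n)`. -/
lemma card_mul {p : ℕ} (hp : 0 < p) {c d : ℤ} (hcd : c ^ 2 + c * d + d ^ 2 = (p : ℤ)) (n : ℕ)
    (hc : IsCoprime c (p : ℤ)) :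
    {z ∈ S (p * n) | (p : ℤ) ∣ c * z.2 - d * z.1}.ncard = r n := by
  have hp' : (p : ℤ) ≠ 0 := by exact_mod_cast hp.ne'
  symm
  refine Set.ncard_congr (fun z _ => (c * z.1 - d * z.2, c * z.2 + d * z.1 + d * z.2)) ?_ ?_ ?_
  · rintro ⟨a, b⟩ h
    rw [mem_S] at h
    refine ⟨?_, ?_⟩
    · rw [mem_S]; push_cast
      rw [← h, ← hcd]; ring
    · refine ⟨b, ?_⟩
      dsimp only
      rw [← hcd]; ring
  · rintro ⟨a, b⟩ ⟨a', b'⟩ h h' e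
    simp only [Prod.mk.injEq] at e ⊢
    obtain ⟨e1, e2⟩ := e
    constructor
    · apply mul_left_cancel₀ hp'
      rw [← hcd]; linear_combination (c + d) * e1 + d * e2
    · apply mul_left_cancel₀ hp'
      rw [← hcd]; linear_combination c * e2 - d * e1
  · rintro ⟨x, y⟩ ⟨h, b, hb⟩
    rw [mem_S] at h
    dsimp only at h hb
    have h1 : (p : ℤ) ∣ c * ((c + d) * x + d * y) := by
      refine ⟨x + d * b, ?_⟩
      linear_combination x * hcd + d * hb
    obtain ⟨a, ha⟩ := hc.symm.dvd_of_dvd_mul_left h1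
    have hx : c * a - d * b = x := by
      apply mul_left_cancel₀ hp'
      linear_combination - c * ha + d * hb + x * hcd
    have hy : c * b + d * a + d * b = y := by
      apply mul_left_cancel₀ hp'
      linear_combination - d * ha - (c + d) * hb + y * hcd
    refine ⟨(a, b), ?_, ?_⟩
    · rw [mem_S]
      apply mul_left_cancel₀ hp'
      push_cast at h
      rw [← h, ← hx, ← hy]
      dsimp only
      rw [← hcd]; ring
    · simp [hx, hy]

lemma card_smul {p : ℕ} (hp : 0 < p) (n : ℕ) :
    {z ∈ S (p * n) | (p : ℤ) ∣ z.1 ∧ (p : ℤ) ∣ z.2}.ncard = if p ∣ n then r (n / p) else 0 := by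
  have hp' : (p : ℤ) ≠ 0 := by exact_mod_cast hp.ne'
  split_ifs with hn
  · obtain ⟨m, rfl⟩ := hn
    rw [Nat.mul_div_cancel_left _ hp]
    symm
    refine Set.ncard_congr (fun z _ => (p * z.1, p * z.2)) ?_ ?_ ?_
    · rintro ⟨a, b⟩ h
      rw [mem_S] at h
      refine ⟨?_, ⟨a, rfl⟩, ⟨b, rfl⟩⟩
      rw [mem_S]; push_cast; rw [← h]; ring
    · rintro ⟨a, b⟩ ⟨a', b'⟩ h h' e
      simp only [Prod.mk.injEq] at e ⊢
      exact ⟨mul_left_cancel₀ hp' e.1, mul_left_cancel₀ hp' e.2⟩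
    · rintro ⟨x, y⟩ ⟨h, ⟨a, ha⟩, ⟨b, hb⟩⟩
      rw [mem_S] at h
      dsimp only at h ha hb
      subst ha hb
      refine ⟨(a, b), ?_, rfl⟩
      rw [mem_S]
      apply mul_left_cancel₀ (mul_ne_zero hp' hp')
      push_cast at h
      linear_combination h
  · rw [Set.ncard_eq_zero ((S_finite _).subset (Set.sep_subset _ _))]
    ext ⟨x, y⟩
    simp only [Set.mem_sep_iff, Set.mem_empty_iff_false, iff_false]
    rintro ⟨h, ⟨a, ha⟩, ⟨b, hb⟩⟩
    rw [mem_S] at h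
    dsimp only at h ha hb
    subst ha hb
    apply hn
    have : (p : ℤ) ∣ n := ⟨a ^ 2 + a * b + b ^ 2, by
      apply mul_left_cancel₀ hp'
      push_cast at h
      linear_combination -h⟩
    exact_mod_cast this

lemma hecke_three (n : ℕ) : r (3 * n) = r n := by
  rw [← card_mul (p := 3) (c := 1) (d := 1) (by norm_num) (by norm_num) n isCoprime_one_left, r]
  congr 1
  ext ⟨x, y⟩
  simp only [Set.mem_sep_iff, iff_self_and]
  intro h
  rw [mem_S] at h
  push_cast at h
  apply Int.Prime.dvd_pow' (k := 2) Nat.prime_three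
  exact ⟨n - x * y, by push_cast; linear_combination h⟩

lemma root_of_dvd {p : ℕ} [Fact p.Prime] {x y : ℤ}
    (h : (p : ℤ) ∣ x ^ 2 + x * y + y ^ 2) (hy : ¬ (p : ℤ) ∣ y) :
    ∃ t : ZMod p, t ^ 2 + t + 1 = 0 := by
  have hy' : (y : ZMod p) ≠ 0 := by rwa [Ne, ZMod.intCast_zmod_eq_zero_iff_dvd]
  have h' : ((x ^ 2 + x * y + y ^ 2 : ℤ) : ZMod p) = 0 := by
    rwa [ZMod.intCast_zmod_eq_zero_iff_dvd]
  push_cast at h'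
  refine ⟨x / y, ?_⟩
  field_simp
  linear_combination h'

lemma mod_of_root {p : ℕ} [Fact p.Prime] (hp3 : p ≠ 3) {t : ZMod p} (ht : t ^ 2 + t + 1 = 0) :
    p % 3 = 1 := by
  have hp : p.Prime := Fact.out
  have h0 : t ≠ 0 := by rintro rfl; simp at ht
  have h1 : t ≠ 1 := by
    rintro rfl
    have : ((3 : ℕ) : ZMod p) = 0 := by push_cast; linear_combination ht
    rw [ZMod.natCast_eq_zero_iff] at this
    exact hp3 ((Nat.prime_dvd_prime_iff_eq hp Nat.prime_three).1 this)
  have h3 : t ^ 3 = 1 := by linear_combination (t - 1) * ht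
  have ho : orderOf t = 3 := orderOf_eq_prime h3 h1
  have := ZMod.orderOf_dvd_card_sub_one h0
  rw [ho] at this
  have := hp.two_le
  omega

lemma exists_root {p : ℕ} [Fact p.Prime] (h : p % 3 = 1) : ∃ t : ZMod p, t ^ 2 + t + 1 = 0 := by
  have hp : p.Prime := Fact.out
  have : 3 ∣ Fintype.card (ZMod p)ˣ := by
    rw [ZMod.card_units]; omega
  obtain ⟨u, hu⟩ := exists_prime_orderOf_dvd_card 3 this
  refine ⟨(u : ZMod p), ?_⟩
  have h3 : (u : ZMod p) ^ 3 = 1 := by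
    rw [← Units.val_pow_eq_pow_val, ← hu, pow_orderOf_eq_one]; rfl
  have h1 : (u : ZMod p) - 1 ≠ 0 := by
    rw [sub_ne_zero]
    intro h
    have : u = 1 := Units.ext h
    rw [this] at hu; simp at hu
  apply mul_left_cancel₀ h1
  linear_combination h3

lemma hecke_two {p : ℕ} [Fact p.Prime] (h : p % 3 = 2) (n : ℕ) :
    r (p * n) = if p ∣ n then r (n / p) else 0 := by
  have hp : p.Prime := Fact.out
  rw [← card_smul hp.pos, r]
  congr 1
  ext ⟨x, y⟩
  simp only [Set.mem_sep_iff, iff_self_and]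
  intro hz
  rw [mem_S] at hz
  dsimp only at hz
  have hd : (p : ℤ) ∣ x ^ 2 + x * y + y ^ 2 := by
    rw [hz]; push_cast; exact dvd_mul_right _ _
  have key : ∀ x y : ℤ, (p : ℤ) ∣ x ^ 2 + x * y + y ^ 2 → (p : ℤ) ∣ y := by
    intro x y hd
    by_contra hy
    obtain ⟨t, ht⟩ := root_of_dvd hd hy
    have := mod_of_root (by rintro rfl; omega) ht
    omega
  exact ⟨key y x (by convert hd using 1; ring), key x y hd⟩

lemma exists_pi {p : ℕ} [Fact p.Prime] (h : p % 3 = 1) :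
    ∃ c d : ℤ, c ^ 2 + c * d + d ^ 2 = (p : ℤ) := by
  have hp : p.Prime := Fact.out
  obtain ⟨t, ht⟩ := exists_root h
  set k := Nat.sqrt p with hk
  have hk1 : k * k < p := by
    refine lt_of_le_of_ne (Nat.sqrt_le p) ?_
    intro h
    exact (Nat.not_prime_mul (a := k) (b := k) (by rintro h1; rw [h1] at h; exact hp.one_lt.ne h)
      (by rintro h1; rw [h1] at h; exact hp.one_lt.ne h)) (h ▸ hp)
  have hk2 : p < (k + 1) * (k + 1) := Nat.lt_succ_sqrt p
  obtain ⟨⟨a, b⟩, hab, ⟨a', b'⟩, hab', hne, he⟩ := Finset.exists_ne_map_eq_of_card_lt_of_maps_to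
    (s := Finset.range (k + 1) ×ˢ Finset.range (k + 1)) (t := (Finset.univ : Finset (ZMod p)))
    (f := fun z => (z.1 : ZMod p) - t * z.2)
    (by rw [Finset.card_product, Finset.card_univ, ZMod.card, Finset.card_range]; exact hk2)
    (fun _ _ => Finset.mem_univ _)
  simp only [Finset.mem_product, Finset.mem_range] at hab hab'
  dsimp only at he
  obtain ⟨X, hX⟩ : ∃ X : ℤ, X = (a : ℤ) - a' := ⟨_, rfl⟩
  obtain ⟨Y, hY⟩ : ∃ Y : ℤ, Y = (b : ℤ) - b' := ⟨_, rfl⟩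
  have hkk : (k : ℤ) * k < p := by exact_mod_cast hk1
  have hXk : X ^ 2 ≤ k * k := by
    have h1 : X ≤ k := by omega
    have h2 : -k ≤ X := by omega
    nlinarith
  have hYk : Y ^ 2 ≤ k * k := by
    have h1 : Y ≤ k := by omega
    have h2 : -k ≤ Y := by omega
    nlinarith
  have hXY : X ≠ 0 ∨ Y ≠ 0 := by
    by_contra! hc
    apply hne
    rw [Prod.mk.injEq]
    constructor <;> omega
  have hdvd : (p : ℤ) ∣ X ^ 2 + X * Y + Y ^ 2 := by
    rw [← ZMod.intCast_zmod_eq_zero_iff_dvd, hX, hY]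
    push_cast
    have e : (a : ZMod p) - a' = t * (b - b') := by linear_combination he
    rw [e]
    linear_combination ((b : ZMod p) - b') ^ 2 * ht
  obtain ⟨q, hq⟩ := hdvd
  have hp0 : (0 : ℤ) < p := by exact_mod_cast hp.pos
  have hpos : 0 < X ^ 2 + X * Y + Y ^ 2 := by
    rcases hXY with h0 | h0
    · have := sq_pos_of_ne_zero h0
      nlinarith [sq_nonneg (X + 2 * Y)]
    · have := sq_pos_of_ne_zero h0
      nlinarith [sq_nonneg (2 * X + Y)]
  have hlt : X ^ 2 + X * Y + Y ^ 2 < 3 * p := by nlinarith [sq_nonneg (X - Y)]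
  rw [hq] at hpos hlt
  have hq0 : 0 < q := by
    by_contra! hc
    nlinarith
  have hq3 : q < 3 := by
    by_contra! hc
    nlinarith
  have hq12 : q = 1 ∨ q = 2 := by omega
  rcases hq12 with rfl | rfl
  · exact ⟨X, Y, by rw [hq, mul_one]⟩
  · exfalso
    have hp2 : p % 2 = 1 := by
      rcases hp.eq_two_or_odd with h2 | h2
      · rw [h2] at h; omega
      · exact h2
    rcases Int.even_or_odd' X with ⟨u, rfl | rfl⟩ <;> rcases Int.even_or_odd' Y with ⟨v, rfl | rfl⟩
    · ring_nf at hq; omega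
    · ring_nf at hq; omega
    · ring_nf at hq; omega
    · ring_nf at hq; omega

lemma hecke_one {p : ℕ} [Fact p.Prime] (h : p % 3 = 1) (n : ℕ) :
    r (p * n) + (if p ∣ n then r (n / p) else 0) = 2 * r n := by
  have hp : p.Prime := Fact.out
  have hpi : Prime (p : ℤ) := Nat.prime_iff_prime_int.1 hp
  have hp' : (p : ℤ) ≠ 0 := hpi.ne_zero
  obtain ⟨c, d, hcd⟩ := exists_pi h
  have aux : ∀ c d : ℤ, c ^ 2 + c * d + d ^ 2 = (p : ℤ) → ¬ (p : ℤ) ∣ d := by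
    rintro c d hcd ⟨e, rfl⟩
    have : (p : ℤ) ∣ c ^ 2 := ⟨1 - c * e - p * e ^ 2, by linear_combination hcd⟩
    obtain ⟨f, rfl⟩ := hpi.dvd_of_dvd_pow this
    apply hpi.not_isUnit
    apply IsUnit.of_mul_eq_one (f ^ 2 + f * e + e ^ 2)
    apply mul_left_cancel₀ hp'
    linear_combination hcd
  have hd := aux c d hcd
  have hc := aux d c (by linear_combination hcd)
  have hcd2 := aux (-d) (c + d) (by linear_combination hcd)
  have h2 : ¬ (p : ℤ) ∣ 2 * c + d := by
    rintro ⟨e, he⟩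
    have : (p : ℤ) ∣ 3 * d ^ 2 := ⟨4 - p * e ^ 2, by
      linear_combination 4 * hcd - (2 * c + d + p * e) * he⟩
    rcases hpi.dvd_or_dvd this with h3 | h3
    · have h3' : p ∣ 3 := by exact_mod_cast h3
      rw [Nat.prime_dvd_prime_iff_eq hp Nat.prime_three] at h3'
      omega
    · exact hd (hpi.dvd_of_dvd_pow h3)
  have hA := card_mul hp.pos hcd n ((hpi.coprime_iff_not_dvd).2 hc).symm
  have hB := card_mul hp.pos (c := c + d) (d := -d) (by linear_combination hcd) n
    ((hpi.coprime_iff_not_dvd).2 hcd2).symm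
  rw [← card_smul hp.pos, two_mul]
  nth_rewrite 1 [← hA]
  rw [← hB, r]
  have fin : ∀ P : ℤ × ℤ → Prop, {z ∈ S (p * n) | P z}.Finite :=
    fun P => (S_finite _).subset (Set.sep_subset _ _)
  rw [← Set.ncard_union_add_ncard_inter _ _ (fin _) (fin _)]
  congr 2
  · ext ⟨x, y⟩
    simp only [Set.mem_union, Set.mem_sep_iff, ← and_or_left, iff_self_and]
    intro hz
    rw [mem_S] at hz
    push_cast at hz
    apply hpi.dvd_or_dvd
    exact ⟨y ^ 2 - d ^ 2 * n, by linear_combination y ^ 2 * hcd - d ^ 2 * hz⟩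
  · ext ⟨x, y⟩
    simp only [Set.mem_inter_iff, Set.mem_sep_iff]
    constructor
    · rintro ⟨hz, hx, hy⟩
      exact ⟨⟨hz, dvd_sub (hy.mul_left _) (hx.mul_left _)⟩,
        ⟨hz, dvd_sub (hy.mul_left _) (hx.mul_left _)⟩⟩
    · rintro ⟨⟨hz, h3⟩, ⟨-, h4⟩⟩
      have hy : (p : ℤ) ∣ y := by
        have : (p : ℤ) ∣ (2 * c + d) * y := by
          have := dvd_add h3 h4
          ring_nf at this ⊢
          exact this
        exact (hpi.dvd_or_dvd this).resolve_left h2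
      have hx : (p : ℤ) ∣ x := by
        have : (p : ℤ) ∣ d * x := by
          have := dvd_sub (hy.mul_left c) h3
          rwa [sub_sub_cancel] at this
        exact (hpi.dvd_or_dvd this).resolve_left hd
      exact ⟨hz, hx, hy⟩


/-- Divisor sum of the character. -/
def sg (χ : DirichletCharacter ℂ 3) (n : ℕ) : ℂ := ∑ d ∈ n.divisors, χ (d : ZMod 3)

lemma sg_hecke (χ : DirichletCharacter ℂ 3) {p : ℕ} (hp : p.Prime) {n : ℕ} (hn : 0 < n) :
    sg χ (p * n) + χ p * (if p ∣ n then sg χ (n / p) else 0) = (1 + χ p) * sg χ n := by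
  classical
  have hU : (p * n).divisors = n.divisors ∪ n.divisors.image (p * ·) := by
    ext d
    simp only [Nat.mem_divisors, Finset.mem_union, Finset.mem_image]
    constructor
    · rintro ⟨hd, -⟩
      by_cases hpd : p ∣ d
      · obtain ⟨e, rfl⟩ := hpd
        exact Or.inr ⟨e, ⟨Nat.dvd_of_mul_dvd_mul_left hp.pos hd, hn.ne'⟩, rfl⟩
      · exact Or.inl ⟨((Nat.Prime.coprime_iff_not_dvd hp).2 hpd).symm.dvd_of_dvd_mul_left hd, hn.ne'⟩
    · rintro (⟨hd, -⟩ | ⟨e, ⟨he, -⟩, rfl⟩)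
      · exact ⟨hd.mul_left _, (Nat.mul_pos hp.pos hn).ne'⟩
      · exact ⟨Nat.mul_dvd_mul_left _ he, (Nat.mul_pos hp.pos hn).ne'⟩
  have hinj : Function.Injective (p * · : ℕ → ℕ) := fun a b h => Nat.eq_of_mul_eq_mul_left hp.pos h
  have himg : ∀ m : ℕ, ∑ d ∈ m.divisors.image (p * ·), χ (d : ZMod 3) = χ p * sg χ m := by
    intro m
    rw [Finset.sum_image (fun a _ b _ h => hinj h), sg, Finset.mul_sum]
    refine Finset.sum_congr rfl fun d _ => ?_
    push_cast
    rw [map_mul]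
  have hI : ∑ d ∈ n.divisors ∩ n.divisors.image (p * ·), χ (d : ZMod 3)
      = χ p * (if p ∣ n then sg χ (n / p) else 0) := by
    split_ifs with h
    · obtain ⟨m, rfl⟩ := h
      rw [Nat.mul_div_cancel_left _ hp.pos, ← himg]
      refine Finset.sum_congr ?_ fun _ _ => rfl
      have hm : m ≠ 0 := by rintro rfl; simp at hn
      ext d
      simp only [Nat.mem_divisors, Finset.mem_inter, Finset.mem_image]
      constructor
      · rintro ⟨⟨hd, -⟩, ⟨e, -, rfl⟩⟩
        exact ⟨e, ⟨Nat.dvd_of_mul_dvd_mul_left hp.pos hd, hm⟩, rfl⟩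
      · rintro ⟨e, ⟨he, -⟩, rfl⟩
        exact ⟨⟨Nat.mul_dvd_mul_left _ he, hn.ne'⟩, ⟨e, ⟨he.mul_left _, hn.ne'⟩, rfl⟩⟩
    · rw [mul_zero]
      apply Finset.sum_eq_zero
      intro d hd
      simp only [Nat.mem_divisors, Finset.mem_inter, Finset.mem_image] at hd
      obtain ⟨⟨hd, -⟩, ⟨e, -, rfl⟩⟩ := hd
      exact absurd (dvd_of_mul_right_dvd hd) h
  rw [← hI, sg, hU, Finset.sum_union_inter, himg, sg]
  ring

lemma chi_two {χ : DirichletCharacter ℂ 3} (hχ : χ ≠ 1) : χ 2 = -1 := by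
  have h4 : χ 2 * χ 2 = 1 := by
    rw [← map_mul, show (2 * 2 : ZMod 3) = 1 by decide, map_one]
  rcases mul_self_eq_one_iff.1 h4 with h | h
  · exfalso
    apply hχ
    ext a
    rw [MulChar.one_apply_coe]
    have : ∀ a : (ZMod 3)ˣ, (a : ZMod 3) = 1 ∨ (a : ZMod 3) = 2 := by decide
    rcases this a with h1 | h1 <;> rw [h1]
    · exact map_one χ
    · exact h
  · exact h

lemma r_hecke {χ : DirichletCharacter ℂ 3} (hχ : χ ≠ 1) {p : ℕ} (hp : p.Prime) (n : ℕ) :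
    (r (p * n) : ℂ) + χ p * ((if p ∣ n then r (n / p) else 0 : ℕ) : ℂ) = (1 + χ p) * r n := by
  have : Fact p.Prime := ⟨hp⟩
  have h3 : p % 3 = 0 ∨ p % 3 = 1 ∨ p % 3 = 2 := by omega
  have hmod : ((p % 3 : ℕ) : ZMod 3) = p := by simp
  rcases h3 with h | h | h
  · have : p = 3 := ((Nat.prime_dvd_prime_iff_eq Nat.prime_three hp).1 (Nat.dvd_of_mod_eq_zero h)).symm
    subst this
    have h0 : χ ((3 : ℕ) : ZMod 3) = 0 := by
      apply MulChar.map_nonunit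
      rw [ZMod.natCast_self]
      exact not_isUnit_zero
    rw [h0, hecke_three]; ring
  · rw [← hmod, h]
    have := hecke_one h n
    simp only [Nat.cast_one, map_one, one_mul]
    exact_mod_cast this
  · rw [← hmod, h]
    have := hecke_two h n
    rw [this, show ((2 : ℕ) : ZMod 3) = 2 by rfl, chi_two hχ]
    ring

lemma r_eq {χ : DirichletCharacter ℂ 3} (hχ : χ ≠ 1) (n : ℕ) (hn : 0 < n) :
    (r n : ℂ) = 6 * sg χ n := by
  induction n using Nat.strong_induction_on with
  | _ n ih =>
    by_cases h1 : n = 1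
    · subst h1
      simp [r_one, sg]
    · obtain ⟨p, hp, m, rfl⟩ := Nat.exists_prime_and_dvd h1
      have hm : 0 < m := Nat.pos_of_mul_pos_left hn
      have h2 := r_hecke hχ hp m
      have h3 := sg_hecke χ hp hm
      have hmlt : m < p * m := by nlinarith [hp.two_le]
      have e1 := ih m hmlt hm
      have e2 : ((if p ∣ m then r (m / p) else 0 : ℕ) : ℂ)
          = 6 * (if p ∣ m then sg χ (m / p) else 0) := by
        split_ifs with h
        · exact ih _ ((Nat.div_le_self _ _).trans_lt hmlt) (Nat.div_pos (Nat.le_of_dvd hm h) hp.pos)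
        · simp
      rw [e1, e2] at h2
      linear_combination h2 - 6 * h3

/-- The natural number `m² + mn + n²`. -/
def nf (p : {p : ℤ × ℤ // p ≠ 0}) : ℕ := (p.1.1 ^ 2 + p.1.1 * p.1.2 + p.1.2 ^ 2).natAbs

lemma nf_cast (p : {p : ℤ × ℤ // p ≠ 0}) :
    (nf p : ℤ) = p.1.1 ^ 2 + p.1.1 * p.1.2 + p.1.2 ^ 2 := by
  rw [nf, Int.natCast_natAbs, abs_of_nonneg]
  nlinarith [sq_nonneg (p.1.1 + p.1.2), sq_nonneg p.1.1, sq_nonneg p.1.2]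

lemma nf_ne_zero (p : {p : ℤ × ℤ // p ≠ 0}) : nf p ≠ 0 := by
  intro h
  have h0 := nf_cast p
  rw [h] at h0
  obtain ⟨⟨x, y⟩, hp⟩ := p
  apply hp
  dsimp only at h0
  push_cast at h0
  have hx : x ^ 2 = 0 := by nlinarith [sq_nonneg (x + y), sq_nonneg x, sq_nonneg y]
  have hy : y ^ 2 = 0 := by nlinarith [sq_nonneg (x + y), sq_nonneg x, sq_nonneg y]
  rw [pow_eq_zero_iff two_ne_zero] at hx hy
  rw [hx, hy]; rfl

/-- Fibres of `nf`. -/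
def fibEquiv (n : ℕ) (hn : n ≠ 0) : {p : {p : ℤ × ℤ // p ≠ 0} // nf p = n} ≃ S n where
  toFun p := ⟨p.1.1, by rw [mem_S, ← nf_cast, p.2]⟩
  invFun z := ⟨⟨z.1, by
    rintro h
    have := z.2
    rw [mem_S, h] at this
    simp at this
    exact hn (by exact_mod_cast this.symm)⟩, by
      have h1 := z.2
      rw [mem_S, ← nf_cast ⟨z.1, _⟩] at h1
      exact_mod_cast h1⟩
  left_inv p := rfl
  right_inv z := rfl

lemma main_sum {F : ℕ → ℝ} (hF : ∀ n, 0 ≤ F n)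
    (hs : Summable fun n : ℕ => if n = 0 then 0 else (r n : ℝ) * F n) :
    ∑' p : {p : ℤ × ℤ // p ≠ 0}, F (nf p) = ∑' n : ℕ, if n = 0 then 0 else (r n : ℝ) * F n := by
  have hfib : ∀ n : ℕ, HasSum (fun p : {p : {p : ℤ × ℤ // p ≠ 0} // nf p = n} => F (nf p.1))
      (if n = 0 then 0 else (r n : ℝ) * F n) := by
    intro n
    split_ifs with h
    · subst h
      have : IsEmpty {p : {p : ℤ × ℤ // p ≠ 0} // nf p = 0} := ⟨fun p => nf_ne_zero p.1 p.2⟩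
      exact hasSum_empty
    · have := (S_finite n).fintype
      have : Fintype {p : {p : ℤ × ℤ // p ≠ 0} // nf p = n} := Fintype.ofEquiv _ (fibEquiv n h).symm
      have hsum := hasSum_fintype
        (fun p : {p : {p : ℤ × ℤ // p ≠ 0} // nf p = n} => F (nf p.1))
      have e : ∑ p : {p : {p : ℤ × ℤ // p ≠ 0} // nf p = n}, F (nf p.1) = (r n : ℝ) * F n := by
        have hc : ∀ p : {p : {p : ℤ × ℤ // p ≠ 0} // nf p = n}, F (nf p.1) = F n :=
          fun p => by rw [p.2]
        rw [Finset.sum_congr rfl (fun p _ => hc p),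
          Finset.sum_const, nsmul_eq_mul, Finset.card_univ, Fintype.card_congr (fibEquiv n h), r,
          ← Nat.card_coe_set_eq, Nat.card_eq_fintype_card]
      rwa [e] at hsum
  rw [← (Equiv.sigmaFiberEquiv nf).tsum_eq (fun p => F (nf p))]
  have hS : Summable fun x : (Σ y : ℕ, {p // nf p = y}) => F (nf (Equiv.sigmaFiberEquiv nf x)) := by
    rw [summable_sigma_of_nonneg (fun _ => hF _)]
    refine ⟨fun n => (hfib n).summable, ?_⟩
    convert hs using 2 with n
    exact (hfib n).tsum_eq
  rw [hS.tsum_sigma]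
  exact tsum_congr fun n => (hfib n).tsum_eq

end HexZeta

/-- **Factorization of the hexagonal lattice zeta function.** For real `s > 2`,
`∑_{(m,n) ≠ (0,0)} (m² + mn + n²)^{−s/2} = 6 · ζ(s/2) · L(χ₃, s/2)`, where `ζ` is the
Riemann zeta function and `χ₃` is the unique nontrivial (quadratic) Dirichlet character
mod 3 (so `L(χ₃, w) = 1 − 2^{−w} + 4^{−w} − 5^{−w} + ⋯`). -/
theorem hexagonal_lattice_zeta_factorization (s : ℝ) (hs : 2 < s)
    (χ : DirichletCharacter ℂ 3) (hχ : χ ≠ 1) :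
    ((∑' p : {p : ℤ × ℤ // p ≠ 0},
        ((p.1.1 ^ 2 + p.1.1 * p.1.2 + p.1.2 ^ 2 : ℤ) : ℝ) ^ (-(s / 2)) : ℝ) : ℂ)
      = 6 * riemannZeta ((s : ℂ) / 2) * DirichletCharacter.LFunction χ ((s : ℂ) / 2) := by
  have hre : 1 < ((s : ℂ) / 2).re := by
    have : ((s : ℂ) / 2).re = s / 2 := by
      rw [show (s : ℂ) / 2 = ((s / 2 : ℝ) : ℂ) by push_cast; rfl, Complex.ofReal_re]
    rw [this]; linarith
  have hsum1 : LSeriesSummable 1 ((s : ℂ) / 2) := LSeriesSummable_one_iff.mpr hre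
  have hsum2 : LSeriesSummable (fun n : ℕ => χ (n : ZMod 3)) ((s : ℂ) / 2) :=
    DirichletCharacter.LSeriesSummable_of_one_lt_re χ hre
  rw [DirichletCharacter.LFunction_eq_LSeries χ hre, ← LSeries_one_eq_riemannZeta hre, mul_assoc,
    ← LSeries_convolution' hsum1 hsum2]
  have hconv := hsum1.convolution hsum2
  have hterm : ∀ n : ℕ, 6 * LSeries.term (LSeries.convolution 1 (fun n : ℕ => χ (n : ZMod 3)))
      ((s : ℂ) / 2) n
      = ((if n = 0 then 0 else (HexZeta.r n : ℝ) * (n : ℝ) ^ (-(s / 2)) : ℝ) : ℂ) := by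
    intro n
    split_ifs with h
    · simp [h]
    · rw [LSeries.term_of_ne_zero h, LSeries.convolution_def]
      push_cast
      rw [HexZeta.r_eq hχ n (Nat.pos_of_ne_zero h), HexZeta.sg, Complex.ofReal_cpow (by positivity)]
      push_cast
      rw [Complex.cpow_neg, ← div_eq_mul_inv, mul_div_assoc]
      congr 2
      simp only [Pi.one_apply, one_mul]
      exact Nat.sum_divisorsAntidiagonal' (f := fun _ d => χ (d : ZMod 3))
  have hsR : Summable fun n : ℕ =>
      if n = 0 then 0 else (HexZeta.r n : ℝ) * (n : ℝ) ^ (-(s / 2)) := by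
    rw [← Complex.summable_ofReal]
    simp_rw [← hterm]
    exact hconv.mul_left 6
  have hmain := HexZeta.main_sum (F := fun n => (n : ℝ) ^ (-(s / 2))) (fun n => by positivity) hsR
  have hcongr : ∀ p : {p : ℤ × ℤ // p ≠ 0},
      ((p.1.1 ^ 2 + p.1.1 * p.1.2 + p.1.2 ^ 2 : ℤ) : ℝ) ^ (-(s / 2))
        = ((HexZeta.nf p : ℕ) : ℝ) ^ (-(s / 2)) := by
    intro p
    rw [← HexZeta.nf_cast, Int.cast_natCast]
  rw [tsum_congr hcongr, hmain, Complex.ofReal_tsum, LSeries, ← tsum_mul_left]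
  exact tsum_congr fun n => (hterm n).symm
end
end
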